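/- Let θ > 0 and, for each N ≥ 1, let α = α(N) > 0 be real and M = M(N) ≥ N an integer, with α(N)/N → α̂ ≥ 0 and M(N)/N → M̂ as N → ∞. Let y = y(N) be distributed as the β-Jacobi ensemble P_θ^{α,M,N}. Then for every m ≥ 3 and all positive integers k_1,…,k_m, the joint cumulant satisfies κ( 𝔓_{k_1}(y), …, 𝔓_{k_m}(y) ) → 0 as N → ∞. -/

import Mathlib

open MeasureTheory

/-- The (unnormalized) β-Jacobi density `∏_{i<j}|x_i−x_j|^{2θ} ∏_i x_i^{θα−1}(1−x_i)^{θ(M−N)+θ−1}`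
with `β = 2θ`. -/
noncomputable def jacobiDensity (θ α : ℝ) (M N : ℕ) (x : Fin N → ℝ) : ℝ :=
  (∏ p ∈ Finset.univ.filter (fun p : Fin N × Fin N => p.1 < p.2),
      |x p.1 - x p.2| ^ (2 * θ)) *
    ∏ i : Fin N, (x i ^ (θ * α - 1) * (1 - x i) ^ (θ * ((M : ℝ) - (N : ℝ)) + θ - 1))

/-- The unnormalized β-Jacobi measure on `[0,1]^N`. -/
noncomputable def jacobiMeasureRaw (θ α : ℝ) (M N : ℕ) : Measure (Fin N → ℝ) :=
  (volume.restrict (Set.univ.pi fun _ : Fin N => Set.Icc (0 : ℝ) 1)).withDensity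
    fun x => ENNReal.ofReal (jacobiDensity θ α M N x)

/-- The β-Jacobi ensemble `P_θ^{α,M,N}`: the normalized β-Jacobi measure on `[0,1]^N`. -/
noncomputable def jacobiEnsemble (θ α : ℝ) (M N : ℕ) : Measure (Fin N → ℝ) :=
  (jacobiMeasureRaw θ α M N Set.univ)⁻¹ • jacobiMeasureRaw θ α M N


open scoped Classical

/-- `P` is a set partition of `{1,…,m}` (as subsets of `Fin m`). -/
def IsSetPartition {m : ℕ} (P : Finset (Finset (Fin m))) : Prop :=
  (∀ T ∈ P, T.Nonempty) ∧ (∀ T ∈ P, ∀ T' ∈ P, T ≠ T' → Disjoint T T') ∧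
    (∀ i : Fin m, ∃ T ∈ P, i ∈ T)

/-- The joint cumulant `κ(v_1,…,v_m) = ∑_π (−1)^{d−1}(d−1)! ∏_{ℓ} E[∏_{i∈S_ℓ} v_i]`,
the sum over set partitions `π = {S_1,…,S_d}` of `{1,…,m}`. -/
noncomputable def jointCumulant {Ω : Type*} [MeasurableSpace Ω] (μ : Measure Ω)
    {m : ℕ} (v : Fin m → Ω → ℂ) : ℂ :=
  ∑ P ∈ Finset.univ.filter (fun P : Finset (Finset (Fin m)) => IsSetPartition P),
    (-1 : ℂ) ^ (P.card - 1) * (Nat.factorial (P.card - 1) : ℂ) *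
      ∏ S ∈ P, ∫ ω, ∏ i ∈ S, v i ω ∂μ


open scoped Classical
namespace JC

/-- left derivative of a function on lists -/
def D {X : Type} (x : X) (f : List X → ℝ) : List X → ℝ := fun L => f (x :: L)

/-- shuffle product evaluated at a list -/
def mul {X : Type} : List X → (List X → ℝ) → (List X → ℝ) → ℝ
  | [], f, g => f [] * g []
  | x :: L, f, g => mul L (D x f) g + mul L f (D x g)

/-- shuffle product -/
def conv {X : Type} (f g : List X → ℝ) : List X → ℝ := fun L => mul L f g

/-- sum over positions -/
def SS {X : Type} : (X → List X → ℝ) → List X → ℝ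
  | _, [] => 0
  | f, x :: L => f x L + SS (fun y => D x (f y)) L

/-- unit -/
def del {X : Type} (c : ℝ) : List X → ℝ
  | [] => c
  | _ :: _ => 0

variable {X : Type}

theorem D_add (x : X) (f g : List X → ℝ) : D x (f + g) = D x f + D x g := rfl
theorem D_smul (x : X) (c : ℝ) (f : List X → ℝ) : D x (c • f) = c • D x f := rfl
theorem D_conv (x : X) (f g : List X → ℝ) :
    D x (conv f g) = conv (D x f) g + conv f (D x g) := rfl
theorem D_del (x : X) (c : ℝ) : D x (del c) = 0 := rfl

theorem mul_add_left (L : List X) (f f' g : List X → ℝ) :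
    mul L (f + f') g = mul L f g + mul L f' g := by
  induction L generalizing f f' g with
  | nil => simp [mul, add_mul]
  | cons x L ih => simp only [mul, D_add, ih]; ring

theorem mul_smul_left (L : List X) (c : ℝ) (f g : List X → ℝ) :
    mul L (c • f) g = c * mul L f g := by
  induction L generalizing f g with
  | nil => simp [mul, mul_assoc]
  | cons x L ih => simp only [mul, D_smul, ih]; ring

theorem mul_comm' (L : List X) (f g : List X → ℝ) : mul L f g = mul L g f := by
  induction L generalizing f g with
  | nil => simp [mul, mul_comm]
  | cons x L ih => simp only [mul]; rw [ih, ih f]; ring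

theorem conv_comm (f g : List X → ℝ) : conv f g = conv g f := by
  funext L; exact mul_comm' L f g

theorem conv_add_left (f f' g : List X → ℝ) : conv (f + f') g = conv f g + conv f' g := by
  funext L; exact mul_add_left L f f' g
theorem conv_smul_left (c : ℝ) (f g : List X → ℝ) : conv (c • f) g = c • conv f g := by
  funext L; exact mul_smul_left L c f g
theorem conv_add_right (f f' g : List X → ℝ) : conv g (f + f') = conv g f + conv g f' := by
  rw [conv_comm, conv_add_left, conv_comm f, conv_comm f']
theorem conv_smul_right (c : ℝ) (f g : List X → ℝ) : conv g (c • f) = c • conv g f := by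
  rw [conv_comm, conv_smul_left, conv_comm f]
theorem conv_zero_left (g : List X → ℝ) : conv 0 g = 0 := by
  have := conv_smul_left 0 g g
  simpa using this

theorem conv_sub_left (f f' g : List X → ℝ) : conv (f - f') g = conv f g - conv f' g := by
  rw [eq_sub_iff_add_eq, ← conv_add_left, sub_add_cancel]

theorem conv_sum_left {ι : Type} (s : Finset ι) (f : ι → List X → ℝ) (g : List X → ℝ) :
    conv (∑ i ∈ s, f i) g = ∑ i ∈ s, conv (f i) g := by
  induction s using Finset.induction_on with
  | empty => simp [conv_zero_left]
  | insert a s ha ih => rw [Finset.sum_insert ha, Finset.sum_insert ha, conv_add_left, ih]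

theorem conv_assoc (f g h : List X → ℝ) : conv (conv f g) h = conv f (conv g h) := by
  funext L
  induction L generalizing f g h with
  | nil => simp [conv, mul, mul_assoc]
  | cons x L ih =>
    change D x (conv (conv f g) h) L = D x (conv f (conv g h)) L
    simp only [D_conv, conv_add_left, conv_add_right, Pi.add_apply, ih]; ring

theorem del_conv (c : ℝ) (f : List X → ℝ) : conv (del c) f = c • f := by
  funext L
  induction L generalizing f with
  | nil => simp [conv, mul, del]
  | cons x L ih =>
    change D x (conv (del c) f) L = _
    simp only [D_conv, D_del, conv_zero_left, Pi.add_apply, ih]; simp [D]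

theorem SS_conv (f : X → List X → ℝ) (g : List X → ℝ) :
    conv (SS f) g = SS (fun x => conv (f x) g) := by
  funext L
  induction L generalizing f g with
  | nil => simp [conv, mul, SS]
  | cons x L ih =>
    have h1 : D x (SS f) = f x + SS (fun y => D x (f y)) := rfl
    have hadd : ∀ (a b : X → List X → ℝ) (L : List X), SS (fun y => a y + b y) L = SS a L + SS b L := by
      intro a b L
      induction L generalizing a b with
      | nil => simp [SS]
      | cons x L ih => simp only [SS, D_add, ih, Pi.add_apply]; ring
    change D x (conv (SS f) g) L = _
    simp only [D_conv, h1, conv_add_left, Pi.add_apply, ih, SS, hadd]; ring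

theorem mul_eq_zero_of (L : List X) (f g : List X → ℝ) (h : ∀ A, A.Sublist L → f A = 0) :
    mul L f g = 0 := by
  induction L generalizing f g with
  | nil => simp [mul, h [] (List.Sublist.refl _)]
  | cons x L ih =>
    simp only [mul]
    rw [ih (D x f) g (fun A hA => h _ (hA.cons_cons x)), ih f _ (fun A hA => h _ (hA.cons x)), add_zero]

theorem mul_top (L : List X) (f g : List X → ℝ) (h : ∀ A, A.Sublist L → A.length < L.length → f A = 0) :
    mul L f g = f L * g [] := by
  induction L generalizing f g with
  | nil => rfl
  | cons x L ih =>
    simp only [mul]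
    rw [ih (D x f) g (fun A hA hl => h _ (hA.cons_cons x) (by simpa using hl)),
      mul_eq_zero_of L f _ (fun A hA => h _ (hA.cons x) (by have := hA.length_le; simp; omega)), add_zero]
    rfl

theorem cancel_sub (L : List X) (f g Z : List X → ℝ) (hZ : Z [] = 1)
    (h : ∀ A, A.Sublist L → mul A f Z = mul A g Z) : f L = g L := by
  have key : ∀ n, ∀ A, A.Sublist L → A.length = n → (f - g) A = 0 := by
    intro n
    induction n using Nat.strong_induction_on with
    | _ n ih =>
      intro A hA hn
      have h1 := mul_top A (f - g) Z (fun B hB hl => ih _ (hn ▸ hl) B (hB.trans hA) rfl)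
      have h2 : mul A (f - g) Z = 0 := by
        have := congrFun (conv_sub_left f g Z) A
        simp only [conv, Pi.sub_apply] at this
        rw [this, h A hA, sub_self]
      rw [h2, hZ, mul_one] at h1
      exact h1.symm
  have := key _ L (List.Sublist.refl _) rfl
  simpa [sub_eq_zero] using this

theorem cancel (f g Z : List X → ℝ) (hZ : Z [] = 1) (h : conv f Z = conv g Z) : f = g := by
  funext L
  exact cancel_sub L f g Z hZ (fun A _ => congrFun h A)

/-- quotient -/
noncomputable def quo (f Z : List X → ℝ) (L : List X) : ℝ :=
  f L - mul L (fun A => if _h : A.length < L.length then quo f Z A else 0) Z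
termination_by L.length

theorem quo_conv (f Z : List X → ℝ) (hZ : Z [] = 1) : conv (quo f Z) Z = f := by
  funext L
  set t : List X → ℝ := fun A => if _h : A.length < L.length then quo f Z A else 0 with ht
  have h1 : quo f Z = t + (quo f Z - t) := by simp
  have h2 : mul L (quo f Z - t) Z = quo f Z L := by
    rw [mul_top, hZ]
    · simp [ht]
    · intro A _ hl
      simp [ht, hl]
  have h3 : quo f Z L = f L - mul L t Z := by rw [quo]
  change mul L (quo f Z) Z = f L
  rw [h1, mul_add_left, h2, h3]; ring

/-- list cumulants -/
noncomputable def kap (Z : List X → ℝ) : List X → ℝ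
  | [] => 0
  | x :: L => quo (D x Z) Z L

theorem kap_conv (Z : List X → ℝ) (hZ : Z [] = 1) (x : X) : conv (D x (kap Z)) Z = D x Z :=
  quo_conv (D x Z) Z hZ

theorem mul_map {Y : Type} (k : Y → X) (L : List Y) (f g : List X → ℝ) :
    mul (L.map k) f g = mul L (fun A => f (A.map k)) (fun A => g (A.map k)) := by
  induction L generalizing f g with
  | nil => rfl
  | cons x L ih => simp only [List.map_cons, mul, ih]; rfl

theorem mul_bound (L : List X) (f g : List X → ℝ) (a b e : ℝ) (ha : 0 ≤ a) (hb : 0 ≤ b) (he : 0 ≤ e)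
    (hf : ∀ A, A.Sublist L → |f A| ≤ a * e ^ A.length)
    (hg : ∀ A, A.Sublist L → |g A| ≤ b * e ^ A.length) :
    |mul L f g| ≤ a * b * (2 * e) ^ L.length := by
  induction L generalizing f g a b with
  | nil =>
    have h1 := hf [] (List.Sublist.refl _)
    have h2 := hg [] (List.Sublist.refl _)
    simp at h1 h2
    simp only [mul, abs_mul, List.length_nil, pow_zero, mul_one]
    exact mul_le_mul h1 h2 (abs_nonneg _) ha
  | cons x L ih =>
    simp only [mul]
    have h1 := ih (D x f) g (a * e) b (by positivity) hb
      (fun A hA => by have := hf _ (hA.cons_cons x); simp only [List.length_cons, pow_succ] at this; unfold D; linarith)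
      (fun A hA => hg _ (hA.cons x))
    have h2 := ih f (D x g) a (b * e) ha (by positivity)
      (fun A hA => hf _ (hA.cons x))
      (fun A hA => by have := hg _ (hA.cons_cons x); simp only [List.length_cons, pow_succ] at this; unfold D; linarith)
    calc _ ≤ _ := abs_add_le _ _
      _ ≤ _ := add_le_add h1 h2
      _ = _ := by simp only [List.length_cons, pow_succ]; ring

theorem SS_bound (L : List X) (f : X → List X → ℝ) (b : ℝ)
    (h : ∀ x A, (x :: A).Perm L → |f x A| ≤ b) : |SS f L| ≤ L.length * b := by
  induction L generalizing f with
  | nil => simp [SS]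
  | cons x L ih =>
    simp only [SS]
    have h1 := h x L (List.Perm.refl _)
    have h2 := ih (fun y => D x (f y)) (fun y A hA => h y (x :: A) ((List.Perm.swap x y A).trans (hA.cons x)))
    calc _ ≤ _ := abs_add_le _ _
      _ ≤ _ := add_le_add h1 h2
      _ = _ := by push_cast [List.length_cons]; ring

end JC

open scoped Classical
namespace JC

/-- loop equations for a moment function on lists of degrees -/
structure IsLoop (θ a b n : ℝ) (Z : List ℕ → ℝ) : Prop where
  nil : Z [] = 1
  zero : ∀ L, Z (0 :: L) = n * Z L
  zero2 : ∀ x L, Z (x :: 0 :: L) = n * Z (x :: L)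
  loop : ∀ (k : ℕ) (L : List ℕ),
    θ * (∑ l ∈ Finset.range (k + 1), Z (l :: (k - l) :: L)
        - ∑ l ∈ Finset.range (k + 2), Z (l :: (k + 1 - l) :: L))
      + (-θ * (k + 1) + (a - 1) + (k + 1)) * Z (k :: L)
      + (θ * (k + 2) - (a - 1) - (b - 1) - (k + 2)) * Z ((k + 1) :: L)
      + SS (fun (x : ℕ) (A : List ℕ) => (x : ℝ) * (Z ((k + x) :: A) - Z ((k + 1 + x) :: A))) L = 0

variable {θ a b n : ℝ} {Z : List ℕ → ℝ}

theorem IsLoop.kzero (h : IsLoop θ a b n Z) : D 0 (kap Z) = del n := by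
  apply cancel _ _ Z h.nil
  rw [kap_conv Z h.nil, del_conv]
  funext L; exact h.zero L

theorem IsLoop.kzero2 (h : IsLoop θ a b n Z) (x : ℕ) : D 0 (D x (kap Z)) = 0 := by
  apply cancel _ _ Z h.nil
  rw [conv_zero_left]
  have h1 : D 0 (conv (D x (kap Z)) Z) = n • conv (D x (kap Z)) Z := by
    rw [kap_conv Z h.nil]; funext L; exact h.zero2 x L
  have h2 : D 0 Z = n • Z := by funext L; exact h.zero L
  rw [D_conv, h2, conv_smul_right] at h1
  simpa using h1

theorem IsLoop.kloop (h : IsLoop θ a b n Z) (k : ℕ) (L : List ℕ) :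
    θ * (∑ l ∈ Finset.range (k + 1), (kap Z (l :: (k - l) :: L) + mul L (D l (kap Z)) (D (k - l) (kap Z)))
        - ∑ l ∈ Finset.range (k + 2), (kap Z (l :: (k + 1 - l) :: L) + mul L (D l (kap Z)) (D (k + 1 - l) (kap Z))))
      + (-θ * (k + 1) + (a - 1) + (k + 1)) * kap Z (k :: L)
      + (θ * (k + 2) - (a - 1) - (b - 1) - (k + 2)) * kap Z ((k + 1) :: L)
      + SS (fun (x : ℕ) (A : List ℕ) => (x : ℝ) * (kap Z ((k + x) :: A) - kap Z ((k + 1 + x) :: A))) L = 0 := by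
  set W : ℕ → List ℕ → ℝ := fun l => D l (kap Z) with hW
  have hWZ : ∀ l, conv (W l) Z = D l Z := fun l => kap_conv Z h.nil l
  have h2 : ∀ l r, conv (D r (W l) + conv (W l) (W r)) Z = D r (D l Z) := by
    intro l r
    rw [conv_add_left, conv_assoc, hWZ r, ← hWZ l, D_conv]
  set T : List ℕ → ℝ := θ • (∑ l ∈ Finset.range (k + 1), (D (k - l) (W l) + conv (W l) (W (k - l)))
      - ∑ l ∈ Finset.range (k + 2), (D (k + 1 - l) (W l) + conv (W l) (W (k + 1 - l))))
      + (-θ * (k + 1) + (a - 1) + (k + 1)) • W k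
      + (θ * (k + 2) - (a - 1) - (b - 1) - (k + 2)) • W (k + 1)
      + SS (fun (x : ℕ) => (x : ℝ) • (W (k + x) - W (k + 1 + x))) with hT
  have hT0 : T = 0 := by
    apply cancel _ _ Z h.nil
    rw [conv_zero_left, hT]
    simp only [conv_add_left _ _ Z, conv_smul_left, conv_sub_left, conv_sum_left, SS_conv, hWZ] 
    simp only [← conv_add_left, h2]
    funext L
    have := h.loop k L
    simp only [Pi.add_apply, Pi.smul_apply, Pi.sub_apply, Finset.sum_apply, smul_eq_mul, Pi.zero_apply]
    exact this
  have := congrFun hT0 L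
  simp only [hT, Pi.add_apply, Pi.smul_apply, Pi.sub_apply, Finset.sum_apply, smul_eq_mul, Pi.zero_apply] at this
  exact this

/-- Single step estimate. -/
theorem IsLoop.step (h : IsLoop θ a b n Z) (hθ : 0 < θ) (hn : 1 ≤ n) (k : ℕ) (L : List ℕ)
    (hL : ∀ x ∈ L, 0 < x) (d : ℕ) (hd : k + 1 + L.sum = d) (C T B c : ℝ)
    (hC : 0 ≤ C) (hT : 0 ≤ T) (hB : 0 ≤ B) (hc : 0 ≤ c)
    (hlow : ∀ j A, (∀ x ∈ A, 0 < x) → j + A.sum < d → |kap Z (j :: A)| ≤ C * n * (1 / n) ^ A.length)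
    (htop : ∀ j A, 0 < j → (∀ x ∈ A, 0 < x) → j + A.sum = d →
      |kap Z (j :: A)| ≤ T * n * (1 / n) ^ A.length)
    (hprev : ∀ j A, 0 < j → (∀ x ∈ A, 0 < x) → j + A.sum = d → A.length + 1 = L.length →
      |kap Z (j :: A)| ≤ B * n * (1 / n) ^ A.length)
    (hc1 : |-θ * (k + 1) + (a - 1) + (k + 1)| ≤ c * n)
    (hc2 : θ * n ≤ |θ * (k + 2) - (a - 1) - (b - 1) - (k + 2) - 2 * θ * n|) :
    |kap Z ((k + 1) :: L)| ≤
      (d * (C + C * C * 2 ^ d) + d * (T * (1 / n) ^ 2 + C * C * 2 ^ d) + c * C / θ + d * d * (C + B) / θ)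
        * n * (1 / n) ^ L.length := by
  have hn0 : 0 < n := by linarith
  set e : ℝ := 1 / n with he
  have he0 : 0 < e := by positivity
  have he1 : e ≤ 1 := by rw [he, div_le_one hn0]; exact hn
  have hne : n * e = 1 := by rw [he]; field_simp
  set w : ℝ := n * e ^ L.length with hw
  have hw0 : 0 < w := by positivity
  have hlen : L.length ≤ L.sum := by
    clear hd hprev hw hw0
    clear_value w
    induction L with
    | nil => simp
    | cons x L ih =>
      have h1 := hL x (by simp)
      have h2 := ih (fun y hy => hL y (by simp [hy]))
      simp; omega
  have hlend : (L.length : ℝ) ≤ d := by exact_mod_cast (by omega : L.length ≤ d)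
  have h2L : (2 : ℝ) ^ L.length ≤ 2 ^ d := pow_le_pow_right₀ (by norm_num) (by omega)
  have hz : ∀ x A, kap Z (0 :: x :: A) = 0 := fun x A => congrFun h.kzero (x :: A)
  have hz2 : ∀ x A, kap Z (x :: 0 :: A) = 0 := fun x A => congrFun (h.kzero2 x) A
  have hmul : ∀ l r, l + L.sum < d → r + L.sum < d →
      |mul L (D l (kap Z)) (D r (kap Z))| ≤ C * C * 2 ^ d * n * w := by
    intro l r hl hr
    have hsub : ∀ l, l + L.sum < d → ∀ A, A.Sublist L → |D l (kap Z) A| ≤ C * n * e ^ A.length := by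
      intro l hl A hA
      refine hlow l A (fun x hx => hL x (hA.subset hx)) ?_
      have := hA.sum_le_sum (fun x _ => Nat.zero_le x)
      omega
    have := mul_bound L (D l (kap Z)) (D r (kap Z)) (C * n) (C * n) e (by positivity) (by positivity)
      he0.le (hsub l hl) (hsub r hr)
    refine this.trans ?_
    rw [mul_pow]
    calc C * n * (C * n) * (2 ^ L.length * e ^ L.length) = C * C * 2 ^ L.length * n * w := by rw [hw]; ring
      _ ≤ _ := by gcongr
  have hS1 : |∑ l ∈ Finset.range (k + 1), (kap Z (l :: (k - l) :: L) + mul L (D l (kap Z)) (D (k - l) (kap Z)))|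
      ≤ d * (C + C * C * 2 ^ d) * n * w := by
    have hterm : ∀ l ∈ Finset.range (k + 1),
        |kap Z (l :: (k - l) :: L) + mul L (D l (kap Z)) (D (k - l) (kap Z))| ≤ (C + C * C * 2 ^ d) * n * w := by
      intro l hl
      have hl' : l ≤ k := by simpa [Nat.lt_succ_iff] using hl
      have h1 : |kap Z (l :: (k - l) :: L)| ≤ C * n * w := by
        rcases Nat.eq_zero_or_pos (k - l) with h0 | h0
        · rw [h0, hz2, abs_zero]; positivity
        · refine (hlow l ((k - l) :: L) ?_ ?_).trans ?_
          · intro x hx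
            rcases List.mem_cons.1 hx with rfl | hx
            · exact h0
            · exact hL x hx
          · simp; omega
          · rw [List.length_cons, pow_succ]
            calc C * n * (e ^ L.length * e) = C * e * w := by rw [hw]; ring
              _ ≤ C * n * w := by gcongr; linarith
      have h2 := hmul l (k - l) (by omega) (by omega)
      calc _ ≤ _ := abs_add_le _ _
        _ ≤ _ := add_le_add h1 h2
        _ = _ := by ring
    calc _ ≤ ∑ l ∈ Finset.range (k + 1), |_| := Finset.abs_sum_le_sum_abs _ _
      _ ≤ ∑ l ∈ Finset.range (k + 1), (C + C * C * 2 ^ d) * n * w := Finset.sum_le_sum hterm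
      _ = ((k + 1 : ℕ) : ℝ) * (C + C * C * 2 ^ d) * n * w := by
        rw [Finset.sum_const, Finset.card_range, nsmul_eq_mul]; ring
      _ ≤ _ := by gcongr; omega
  have hS2 : |∑ l ∈ Finset.range k, (kap Z ((l + 1) :: (k + 1 - (l + 1)) :: L)
        + mul L (D (l + 1) (kap Z)) (D (k + 1 - (l + 1)) (kap Z)))|
      ≤ d * (T * e ^ 2 + C * C * 2 ^ d) * n * w := by
    have hterm : ∀ l ∈ Finset.range k,
        |kap Z ((l + 1) :: (k + 1 - (l + 1)) :: L) + mul L (D (l + 1) (kap Z)) (D (k + 1 - (l + 1)) (kap Z))|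
          ≤ (T * e ^ 2 + C * C * 2 ^ d) * n * w := by
      intro l hl
      have hl' : l < k := by simpa using hl
      have h1 : |kap Z ((l + 1) :: (k + 1 - (l + 1)) :: L)| ≤ T * e ^ 2 * n * w := by
        refine (htop (l + 1) ((k + 1 - (l + 1)) :: L) (by omega) ?_ ?_).trans ?_
        · intro x hx
          rcases List.mem_cons.1 hx with rfl | hx
          · omega
          · exact hL x hx
        · simp; omega
        · rw [List.length_cons, pow_succ]
          apply le_of_eq
          calc T * n * (e ^ L.length * e) = T * e * 1 * w := by rw [hw]; ring
            _ = _ := by rw [← hne]; ring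
      have h2 := hmul (l + 1) (k + 1 - (l + 1)) (by omega) (by omega)
      calc _ ≤ _ := abs_add_le _ _
        _ ≤ _ := add_le_add h1 h2
        _ = _ := by ring
    calc _ ≤ ∑ l ∈ Finset.range k, |_| := Finset.abs_sum_le_sum_abs _ _
      _ ≤ ∑ l ∈ Finset.range k, (T * e ^ 2 + C * C * 2 ^ d) * n * w := Finset.sum_le_sum hterm
      _ = (k : ℝ) * (T * e ^ 2 + C * C * 2 ^ d) * n * w := by
        rw [Finset.sum_const, Finset.card_range, nsmul_eq_mul]; ring
      _ ≤ _ := by gcongr; omega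
  have hS3 : |(-θ * (k + 1) + (a - 1) + (k + 1)) * kap Z (k :: L)| ≤ c * C * n * w := by
    rw [abs_mul]
    calc _ ≤ (c * n) * (C * n * e ^ L.length) :=
          mul_le_mul hc1 (hlow k L hL (by omega)) (abs_nonneg _) (by positivity)
      _ = _ := by rw [hw]; ring
  have hS4 : |SS (fun (x : ℕ) (A : List ℕ) => (x : ℝ) * (kap Z ((k + x) :: A) - kap Z ((k + 1 + x) :: A))) L|
      ≤ d * d * (C + B) * n * w := by
    refine (SS_bound L _ (d * (C + B) * n * w) ?_).trans ?_
    · intro x A hp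
      have hxpos : 0 < x := hL x (hp.subset (by simp))
      have hApos : ∀ y ∈ A, 0 < y := fun y hy => hL y (hp.subset (by simp [hy]))
      have hsum : x + A.sum = L.sum := by simpa using hp.sum_eq
      have hlen' : A.length + 1 = L.length := by simpa using hp.length_eq
      have h1 := hlow (k + x) A hApos (by omega)
      have h2 := hprev (k + 1 + x) A (by omega) hApos (by omega) hlen'
      have hw2 : n * e ^ A.length = n * w := by
        rw [hw, ← hlen', pow_succ]
        calc n * e ^ A.length = n * e ^ A.length * 1 := by ring
          _ = _ := by rw [← hne]; ring
      rw [mul_assoc, hw2] at h1 h2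
      rw [abs_mul, Nat.abs_cast]
      calc (x : ℝ) * |kap Z ((k + x) :: A) - kap Z ((k + 1 + x) :: A)|
          ≤ d * (C * (n * w) + B * (n * w)) := by
            gcongr
            · omega
            · exact (abs_sub _ _).trans (add_le_add h1 h2)
        _ = _ := by ring
    · calc (L.length : ℝ) * (d * (C + B) * n * w) ≤ d * (d * (C + B) * n * w) := by gcongr
        _ = _ := by ring
  have hloop := h.kloop k L
  set S1 := ∑ l ∈ Finset.range (k + 1), (kap Z (l :: (k - l) :: L) + mul L (D l (kap Z)) (D (k - l) (kap Z)))
  clear_value S1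
  rw [Finset.sum_range_succ _ (k + 1), Finset.sum_range_succ' _ k] at hloop
  simp only [Nat.sub_zero, Nat.sub_self, hz, hz2, h.kzero] at hloop
  have hm1 : mul L (del n) (D (k + 1) (kap Z)) = n * kap Z ((k + 1) :: L) :=
    congrFun (del_conv n (D (k + 1) (kap Z))) L
  have hm2 : mul L (D (k + 1) (kap Z)) (del n) = n * kap Z ((k + 1) :: L) := by
    rw [mul_comm']; exact hm1
  rw [hm1, hm2] at hloop
  set S2 := ∑ l ∈ Finset.range k, (kap Z ((l + 1) :: (k + 1 - (l + 1)) :: L)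
        + mul L (D (l + 1) (kap Z)) (D (k + 1 - (l + 1)) (kap Z)))
  set S3 := (-θ * (k + 1) + (a - 1) + (k + 1)) * kap Z (k :: L)
  set S4 := SS (fun (x : ℕ) (A : List ℕ) => (x : ℝ) * (kap Z ((k + x) :: A) - kap Z ((k + 1 + x) :: A))) L
  set Y := kap Z ((k + 1) :: L)
  have hY : (θ * (k + 2) - (a - 1) - (b - 1) - (k + 2) - 2 * θ * n) * Y = -(θ * S1) + θ * S2 - S3 - S4 := by
    linarith
  have hb : θ * n * |Y| ≤ θ * (d * (C + C * C * 2 ^ d) * n * w) + θ * (d * (T * e ^ 2 + C * C * 2 ^ d) * n * w)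
      + c * C * n * w + d * d * (C + B) * n * w := by
    calc θ * n * |Y| ≤ |θ * (k + 2) - (a - 1) - (b - 1) - (k + 2) - 2 * θ * n| * |Y| := by gcongr
      _ = |-(θ * S1) + θ * S2 - S3 - S4| := by rw [← abs_mul, hY]
      _ ≤ |θ * S1| + |θ * S2| + |S3| + |S4| := by
        refine (abs_sub _ _).trans (add_le_add_left ((abs_sub _ _).trans (add_le_add_left ?_ _)) _)
        exact (abs_add_le _ _).trans (by rw [abs_neg])
      _ = θ * |S1| + θ * |S2| + |S3| + |S4| := by simp only [abs_mul, abs_of_pos hθ]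
      _ ≤ _ := by gcongr
  have hfin : θ * n * |Y| ≤ θ * n * ((d * (C + C * C * 2 ^ d) + d * (T * e ^ 2 + C * C * 2 ^ d) + c * C / θ
      + d * d * (C + B) / θ) * n * e ^ L.length) := by
    refine hb.trans (le_of_eq ?_)
    rw [hw]
    field_simp
  exact le_of_mul_le_mul_left hfin (by positivity)

end JC

open scoped Classical
namespace JC

theorem length_le_sum_of_pos (L : List ℕ) (hL : ∀ x ∈ L, 0 < x) : L.length ≤ L.sum := by
  induction L with
  | nil => simp
  | cons x L ih =>
    have h1 := hL x (by simp)
    have h2 := ih (fun y hy => hL y (by simp [hy]))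
    simp; omega

theorem bound_step (θ : ℝ) (hθ : 0 < θ) (a b : ℕ → ℝ) (Z : ℕ → List ℕ → ℝ)
    (hloop : ∀ N : ℕ, 1 ≤ N → IsLoop θ (a N) (b N) N (Z N))
    (ha : ∀ N, 1 ≤ N → 0 < a N) (hb : ∀ N, 1 ≤ N → 0 < b N) (c : ℝ) (hc : 0 ≤ c)
    (hac : ∀ᶠ N : ℕ in Filter.atTop, a N ≤ c * N) (d : ℕ) (C : ℝ) (hC : 0 ≤ C)
    (hlow : ∀ᶠ N : ℕ in Filter.atTop, ∀ j A, (∀ x ∈ A, 0 < x) → j + A.sum < d →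
      |kap (Z N) (j :: A)| ≤ C * N * (1 / (N : ℝ)) ^ A.length) :
    ∃ K : ℝ, 0 ≤ K ∧ ∀ᶠ N : ℕ in Filter.atTop, ∀ j A, 0 < j → (∀ x ∈ A, 0 < x) → j + A.sum = d →
      |kap (Z N) (j :: A)| ≤ K * N * (1 / (N : ℝ)) ^ A.length := by
  set c' : ℝ := c + θ * d + d + 1 with hc'
  have hc'0 : 0 ≤ c' := by positivity
  set A0 : ℝ := d * (C + C * C * 2 ^ d) + d + d * (C * C * 2 ^ d) + c' * C / θ + d * d * C / θ with hA0
  set A1 : ℝ := d * d / θ with hA1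
  have hA00 : 0 ≤ A0 := by positivity
  have hA10 : 0 ≤ A1 := by positivity
  set Bj : ℕ → ℝ := fun j => Nat.rec A0 (fun _ B => A0 + A1 * B) j with hBj
  have hBj0 : Bj 0 = A0 := rfl
  have hBjs : ∀ j, Bj (j + 1) = A0 + A1 * Bj j := fun j => rfl
  have hBjn : ∀ j, 0 ≤ Bj j := by
    intro j
    induction j with
    | zero => exact hA00
    | succ j ih => rw [hBjs]; positivity
  clear_value Bj
  set K : ℝ := ∑ j ∈ Finset.range (d + 1), Bj j with hK
  have hK0 : 0 ≤ K := Finset.sum_nonneg (fun j _ => hBjn j)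
  refine ⟨2 * K, by positivity, ?_⟩
  filter_upwards [hac, hlow, Filter.eventually_ge_atTop (d + 1), Filter.eventually_ge_atTop (Nat.ceil (2 * K))]
    with N hacN hlowN hNd hNK
  have hN1 : 1 ≤ N := by omega
  have hL := hloop N hN1
  have haN := ha N hN1
  have hbN := hb N hN1
  have hn1 : (1 : ℝ) ≤ N := by exact_mod_cast hN1
  have hn0 : (0 : ℝ) < N := by linarith
  have hNd' : (d : ℝ) + 1 ≤ N := by exact_mod_cast hNd
  have hNK' : 2 * K ≤ N := (Nat.le_ceil _).trans (by exact_mod_cast hNK)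
  set n : ℝ := (N : ℝ) with hn
  set κ := kap (Z N) with hκ
  -- maximal element
  obtain ⟨c0, hc0⟩ := Finite.exists_max (fun c : Composition d =>
    |κ c.blocks| / (n * (1 / n) ^ (c.blocks.length - 1)))
  set T : ℝ := |κ c0.blocks| / (n * (1 / n) ^ (c0.blocks.length - 1)) with hT
  have hT0 : 0 ≤ T := by positivity
  have htop : ∀ j A, 0 < j → (∀ x ∈ A, 0 < x) → j + A.sum = d →
      |κ (j :: A)| ≤ T * n * (1 / n) ^ A.length := by
    intro j A hj hA hs
    have := hc0 ⟨j :: A, by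
      intro i hi
      rcases List.mem_cons.1 hi with rfl | hi
      · exact hj
      · exact hA i hi, by simpa using hs⟩
    simp only [List.length_cons, Nat.add_sub_cancel] at this
    rw [div_le_iff₀ (by positivity)] at this
    rw [mul_assoc]; exact this
  have hind : ∀ j, ∀ k L, 0 < k → (∀ x ∈ L, 0 < x) → k + L.sum = d → L.length = j →
      |κ (k :: L)| ≤ (Bj j * (1 + T * (1 / n) ^ 2)) * n * (1 / n) ^ L.length := by
    intro j
    have hstep : ∀ B, 0 ≤ B → ∀ k L, 0 < k → (∀ x ∈ L, 0 < x) → k + L.sum = d → 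
      (∀ j A, 0 < j → (∀ x ∈ A, 0 < x) → j + A.sum = d → A.length + 1 = L.length →
      |κ (j :: A)| ≤ B * (1 + T * (1 / n) ^ 2) * n * (1 / n) ^ A.length) →
      |κ (k :: L)| ≤ ((A0 + A1 * B) * (1 + T * (1 / n) ^ 2)) * n * (1 / n) ^ L.length := by
      intro B hB k L hk hLp hs hprev
      obtain ⟨k, rfl⟩ := Nat.exists_eq_succ_of_ne_zero hk.ne'
      have hkd : (k : ℝ) + 1 ≤ d := by exact_mod_cast (by omega : k + 1 ≤ d)
      have hk0 : (0 : ℝ) ≤ k := by positivity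
      have hc1 : |-θ * (k + 1) + (a N - 1) + (k + 1)| ≤ c' * n := by
        have h1 : θ * (k + 1) ≤ θ * d := by gcongr
        have h2 : θ * d + d + 1 ≤ (θ * d + d + 1) * n := le_mul_of_one_le_right (by positivity) hn1
        have h3 : 0 ≤ θ * (k + 1) := by positivity
        have h4 : c' * n = c * n + (θ * d + d + 1) * n := by rw [hc']; ring
        rw [abs_le]; constructor <;> linarith
      have hc2 : θ * n ≤ |θ * (k + 2) - (a N - 1) - (b N - 1) - (k + 2) - 2 * θ * n| := by
        rw [← abs_neg]
        refine le_trans ?_ (le_abs_self _)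
        have h1 : θ * (k + 2) ≤ θ * n := by gcongr; linarith
        linarith
      have := hL.step hθ hn1 k L hLp d hs C T (B * (1 + T * (1 / n) ^ 2)) c' hC hT0 (by positivity) hc'0
        hlowN htop hprev hc1 hc2
      refine this.trans ?_
      set y : ℝ := T * (1 / n) ^ 2 with hy
      have hy0 : 0 ≤ y := by positivity
      have hpw : 0 ≤ (1 / n) ^ L.length := by positivity
      refine mul_le_mul_of_nonneg_right (mul_le_mul_of_nonneg_right ?_ hn0.le) hpw
      have : (A0 + A1 * B) * (1 + y) - (d * (C + C * C * 2 ^ d) + d * (y + C * C * 2 ^ d) + c' * C / θ + d * d * (C + B * (1 + y)) / θ)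
        = d + (A0 - d) * y := by
        rw [hA0, hA1]; ring
      have h2 : 0 ≤ A0 - d := by
        have : A0 - d = d * (C + C * C * 2 ^ d) + d * (C * C * 2 ^ d) + c' * C / θ + d * d * C / θ := by
          rw [hA0]; ring
        rw [this]; positivity
      have h3 : (0 : ℝ) ≤ d + (A0 - d) * y := by positivity
      linarith
    induction j with
    | zero =>
      intro k L hk hLp hs hl
      have := hstep 0 le_rfl k L hk hLp hs (by intro j A _ _ _ h; omega)
      rw [hBj0]; simpa using this
    | succ j ih =>
      intro k L hk hLp hs hl
      rw [hBjs]
      exact hstep (Bj j) (hBjn j) k L hk hLp hs (fun i A hi hA hsA hlA => ih i A hi hA hsA (by omega))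
  have hind2 : ∀ k L, 0 < k → (∀ x ∈ L, 0 < x) → k + L.sum = d →
      |κ (k :: L)| ≤ (K * (1 + T * (1 / n) ^ 2)) * n * (1 / n) ^ L.length := by
    intro k L hk hLp hs
    refine (hind _ k L hk hLp hs rfl).trans ?_
    gcongr
    refine Finset.single_le_sum (f := Bj) (fun j _ => hBjn j) ?_
    have := length_le_sum_of_pos L hLp
    simp; omega
  have hTK : T ≤ K * (1 + T * (1 / n) ^ 2) := by
    rcases hblocks : c0.blocks with _ | ⟨k, L⟩
    · rw [hT, hblocks]
      have : κ [] = 0 := rfl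
      simp only [this, abs_zero, zero_div]
      positivity
    · have hpos : ∀ x ∈ k :: L, 0 < x := fun x hx => c0.blocks_pos (by rw [hblocks]; exact hx)
      have hsum := c0.blocks_sum
      rw [hblocks, List.sum_cons] at hsum
      have := hind2 k L (hpos k (by simp)) (fun x hx => hpos x (by simp [hx])) hsum
      have hT' : T = |κ (k :: L)| / (n * (1 / n) ^ L.length) := by
        rw [hT, hblocks]; simp
      rw [hT', div_le_iff₀ (by positivity), ← hT']
      rw [mul_assoc] at this; exact this
  have hT2 : T ≤ 2 * K := by
    have h1 : K * (1 / n) ^ 2 ≤ 1 / 2 := by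
      have : (1 / n) ^ 2 ≤ 1 / n := by
        rw [pow_two]
        exact mul_le_of_le_one_left (by positivity) (by rw [div_le_one hn0]; exact hn1)
      calc K * (1 / n) ^ 2 ≤ K * (1 / n) := by gcongr
        _ ≤ 1 / 2 := by rw [mul_one_div, div_le_div_iff₀ hn0 (by norm_num)]; linarith
    have h2 : K * (1 / n) ^ 2 * T ≤ 1 / 2 * T := by gcongr
    have h3 : K * (1 + T * (1 / n) ^ 2) = K + K * (1 / n) ^ 2 * T := by ring
    linarith
  intro j A hj hA hs
  refine (htop j A hj hA hs).trans ?_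
  gcongr

theorem bound_all (θ : ℝ) (hθ : 0 < θ) (a b : ℕ → ℝ) (Z : ℕ → List ℕ → ℝ)
    (hloop : ∀ N : ℕ, 1 ≤ N → IsLoop θ (a N) (b N) N (Z N))
    (ha : ∀ N, 1 ≤ N → 0 < a N) (hb : ∀ N, 1 ≤ N → 0 < b N) (c : ℝ) (hc : 0 ≤ c)
    (hac : ∀ᶠ N : ℕ in Filter.atTop, a N ≤ c * N) (d : ℕ) :
    ∃ C : ℝ, 0 ≤ C ∧ ∀ᶠ N : ℕ in Filter.atTop, ∀ j A, (∀ x ∈ A, 0 < x) → j + A.sum < d →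
      |kap (Z N) (j :: A)| ≤ C * N * (1 / (N : ℝ)) ^ A.length := by
  induction d with
  | zero => exact ⟨0, le_rfl, Filter.Eventually.of_forall (fun N j A _ h => by omega)⟩
  | succ d ih =>
    obtain ⟨C, hC, hCb⟩ := ih
    obtain ⟨K, hK, hKb⟩ := bound_step θ hθ a b Z hloop ha hb c hc hac d C hC hCb
    refine ⟨C + K + 1, by positivity, ?_⟩
    filter_upwards [hCb, hKb, Filter.eventually_ge_atTop 1] with N h1 h2 hN j A hA hs
    rcases Nat.lt_or_ge (j + A.sum) d with h | h
    · refine (h1 j A hA h).trans ?_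
      gcongr; linarith
    · have h' : j + A.sum = d := by omega
      rcases Nat.eq_zero_or_pos j with rfl | hj
      · have h3 : kap (Z N) (0 :: A) = del (N : ℝ) A := congrFun (hloop N hN).kzero A
        rw [h3]
        rcases A with _ | ⟨x, A⟩
        · simp only [del, List.length_nil, pow_zero, mul_one, Nat.abs_cast]
          exact le_mul_of_one_le_left (by positivity) (by linarith)
        · simp only [del, abs_zero]; positivity
      · refine (h2 j A hj hA h').trans ?_
        gcongr; linarith

end JC

open scoped Classical
namespace JC

/-- partitions of a subset -/
def IsPart {m : ℕ} (S : Finset (Fin m)) (P : Finset (Finset (Fin m))) : Prop :=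
  (∀ T ∈ P, T.Nonempty) ∧ (∀ T ∈ P, ∀ T' ∈ P, T ≠ T' → Disjoint T T') ∧
    (∀ i : Fin m, i ∈ S ↔ ∃ T ∈ P, i ∈ T)

/-- the combinatorial coefficient -/
noncomputable def gco (d : ℕ) : ℝ := (-1 : ℝ) ^ (d - 1) * (Nat.factorial (d - 1) : ℝ)

/-- cumulant of a set function -/
noncomputable def cum {m : ℕ} (Z : Finset (Fin m) → ℝ) (S : Finset (Fin m)) : ℝ :=
  ∑ P ∈ Finset.univ.filter (fun P : Finset (Finset (Fin m)) => IsPart S P),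
    gco P.card * ∏ T ∈ P, Z T

variable {m : ℕ}

theorem IsPart.subset {S : Finset (Fin m)} {P : Finset (Finset (Fin m))} (h : IsPart S P) {T}
    (hT : T ∈ P) : T ⊆ S := fun i hi => (h.2.2 i).2 ⟨T, hT, hi⟩

theorem IsPart.erase {S : Finset (Fin m)} {P : Finset (Finset (Fin m))} (h : IsPart S P) {U}
    (hU : U ∈ P) : IsPart (S \ U) (P.erase U) := by
  refine ⟨fun T hT => h.1 T (Finset.mem_of_mem_erase hT), fun T hT T' hT' hne =>
    h.2.1 T (Finset.mem_of_mem_erase hT) T' (Finset.mem_of_mem_erase hT') hne, fun i => ?_⟩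
  rw [Finset.mem_sdiff, h.2.2 i]
  constructor
  · rintro ⟨⟨T, hT, hi⟩, hiU⟩
    refine ⟨T, Finset.mem_erase.2 ⟨?_, hT⟩, hi⟩
    rintro rfl; exact hiU hi
  · rintro ⟨T, hT, hi⟩
    rw [Finset.mem_erase] at hT
    exact ⟨⟨T, hT.2, hi⟩, fun hiU => Finset.disjoint_left.1 (h.2.1 T hT.2 U hU hT.1) hi hiU⟩

theorem IsPart.insert {S U : Finset (Fin m)} {Q : Finset (Finset (Fin m))} (h : IsPart S Q)
    (hU : U.Nonempty) (hd : Disjoint S U) : IsPart (S ∪ U) (insert U Q) := by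
  have hdis : ∀ T ∈ Q, Disjoint T U := fun T hT => Finset.disjoint_of_subset_left (h.subset hT) hd
  refine ⟨?_, ?_, ?_⟩
  · intro T hT
    rcases Finset.mem_insert.1 hT with rfl | hT
    · exact hU
    · exact h.1 T hT
  · intro T hT T' hT' hne
    rcases Finset.mem_insert.1 hT with rfl | hTQ
    · rcases Finset.mem_insert.1 hT' with rfl | hT'
      · exact absurd rfl hne
      · exact (hdis T' hT').symm
    · rcases Finset.mem_insert.1 hT' with hTU | hT'
      · rw [hTU]; exact hdis T hTQ
      · exact h.2.1 T hTQ T' hT' hne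
  · intro i
    rw [Finset.mem_union, h.2.2 i]
    simp only [Finset.mem_insert, exists_eq_or_imp]
    exact or_comm

theorem IsPart.notMem_of {S U : Finset (Fin m)} {Q : Finset (Finset (Fin m))} (h : IsPart S Q)
    (hU : U.Nonempty) (hd : Disjoint S U) : U ∉ Q := by
  intro hUQ
  obtain ⟨i, hi⟩ := hU
  exact Finset.disjoint_left.1 hd (h.subset hUQ hi) hi

theorem IsPart.card_filter {S : Finset (Fin m)} {P : Finset (Finset (Fin m))} (h : IsPart S P)
    {x : Fin m} (hx : x ∈ S) : (P.filter (fun U => x ∉ U)).card + 1 = P.card := by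
  obtain ⟨T, hT, hxT⟩ := (h.2.2 x).1 hx
  have h1 : P.filter (fun U => x ∈ U) = {T} := by
    ext U
    simp only [Finset.mem_filter, Finset.mem_singleton]
    constructor
    · rintro ⟨hU, hxU⟩
      by_contra hne
      exact Finset.disjoint_left.1 (h.2.1 U hU T hT hne) hxU hxT
    · rintro rfl; exact ⟨hT, hxT⟩
  have h2 := Finset.card_filter_add_card_filter_not (s := P) (fun U => x ∈ U)
  rw [h1, Finset.card_singleton] at h2
  omega

theorem cum_pairs (Z : Finset (Fin m) → ℝ) (S : Finset (Fin m)) (x : Fin m) (hx : x ∉ S) :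
    ∑ T ∈ S.ssubsets, cum Z (insert x T) * Z (S \ T) =
      ∑ P ∈ Finset.univ.filter (fun P : Finset (Finset (Fin m)) => IsPart (insert x S) P),
        ∑ U ∈ P.filter (fun U => x ∉ U), gco (P.card - 1) * ∏ T ∈ P, Z T := by
  simp only [cum, Finset.sum_mul]
  rw [Finset.sum_sigma', Finset.sum_sigma']
  have key : ∀ T Q, T ⊂ S → IsPart (insert x T) Q →
      (S \ T).Nonempty ∧ Disjoint (insert x T) (S \ T) ∧ insert x T ∪ (S \ T) = insert x S := by
    intro T Q hT hQ
    refine ⟨Finset.sdiff_nonempty.2 hT.2, ?_, ?_⟩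
    · rw [Finset.disjoint_insert_left]
      exact ⟨fun h => hx (Finset.mem_sdiff.1 h).1, Finset.disjoint_sdiff⟩
    · rw [Finset.insert_union, Finset.union_sdiff_of_subset hT.1]
  refine Finset.sum_bij' (fun p _ => ⟨insert (S \ p.1) p.2, S \ p.1⟩)
    (fun p _ => ⟨S \ p.2, p.1.erase p.2⟩) ?_ ?_ ?_ ?_ ?_
  · rintro ⟨T, Q⟩ h
    simp only [Finset.mem_sigma, Finset.mem_ssubsets, Finset.mem_filter, Finset.mem_univ, true_and] at h ⊢
    obtain ⟨k1, k2, k3⟩ := key T Q h.1 h.2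
    refine ⟨?_, Finset.mem_insert_self _ _, fun h => hx (Finset.mem_sdiff.1 h).1⟩
    have := h.2.insert k1 k2
    rwa [k3] at this
  · rintro ⟨P, U⟩ h
    simp only [Finset.mem_sigma, Finset.mem_ssubsets, Finset.mem_filter, Finset.mem_univ, true_and] at h ⊢
    obtain ⟨hP, hU, hxU⟩ := h
    have hUS : U ⊆ S := by
      intro i hi
      rcases Finset.mem_insert.1 (hP.subset hU hi) with rfl | h
      · exact absurd hi hxU
      · exact h
    refine ⟨?_, ?_⟩
    · rw [Finset.ssubset_iff_subset_ne]
      refine ⟨Finset.sdiff_subset, fun h => ?_⟩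
      obtain ⟨i, hi⟩ := hP.1 U hU
      have := hUS hi
      rw [← h] at this
      exact (Finset.mem_sdiff.1 this).2 hi
    · have := hP.erase hU
      rwa [Finset.insert_sdiff_of_notMem _ hxU] at this
  · rintro ⟨T, Q⟩ h
    simp only [Finset.mem_sigma, Finset.mem_ssubsets, Finset.mem_filter, Finset.mem_univ, true_and] at h
    obtain ⟨k1, k2, k3⟩ := key T Q h.1 h.2
    simp only [Finset.erase_insert (h.2.notMem_of k1 k2), Finset.sdiff_sdiff_eq_self h.1.1]
  · rintro ⟨P, U⟩ h
    simp only [Finset.mem_sigma, Finset.mem_filter, Finset.mem_univ, true_and] at h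
    obtain ⟨hP, hU, hxU⟩ := h
    have hUS : U ⊆ S := by
      intro i hi
      rcases Finset.mem_insert.1 (hP.subset hU hi) with rfl | h
      · exact absurd hi hxU
      · exact h
    simp only [Finset.sdiff_sdiff_eq_self hUS, Finset.insert_erase hU]
  · rintro ⟨T, Q⟩ h
    simp only [Finset.mem_sigma, Finset.mem_ssubsets, Finset.mem_filter, Finset.mem_univ, true_and] at h
    obtain ⟨k1, k2, k3⟩ := key T Q h.1 h.2
    have hn := h.2.notMem_of k1 k2
    simp only [Finset.card_insert_of_notMem hn, Finset.prod_insert hn, Nat.add_sub_cancel]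
    ring

theorem cum_rec (Z : Finset (Fin m) → ℝ) (hZ : Z ∅ = 1) (S : Finset (Fin m)) (x : Fin m) (hx : x ∉ S) :
    ∑ T ∈ S.powerset, cum Z (insert x T) * Z (S \ T) = Z (insert x S) := by
  have hps : S.powerset = insert S S.ssubsets := by
    ext T
    simp only [Finset.mem_powerset, Finset.mem_insert, Finset.mem_ssubsets]
    constructor
    · intro h
      rcases h.eq_or_ssubset with h | h
      · exact Or.inl h
      · exact Or.inr h
    · rintro (rfl | h)
      · exact subset_rfl
      · exact h.1
  rw [hps, Finset.sum_insert (by simp), cum_pairs Z S x hx, Finset.sdiff_self, hZ, mul_one, cum,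
    ← Finset.sum_add_distrib]
  have hsing : IsPart (insert x S) {insert x S} := by
    refine ⟨by simp, by simp, by simp⟩
  rw [Finset.sum_eq_single {insert x S}]
  · have := hsing.card_filter (Finset.mem_insert_self x S)
    rw [Finset.card_singleton] at this
    rw [Finset.sum_const, (by omega : (Finset.filter (fun U => x ∉ U) {insert x S}).card = 0)]
    simp [gco]
  · intro P hP hne
    simp only [Finset.mem_filter, Finset.mem_univ, true_and] at hP
    have hc := hP.card_filter (Finset.mem_insert_self x S)
    rw [Finset.sum_const, nsmul_eq_mul]
    have hc2 : (P.filter (fun U => x ∉ U)).card ≠ 0 := by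
      intro h0
      rw [h0] at hc
      obtain ⟨U, rfl⟩ := Finset.card_eq_one.1 hc.symm
      apply hne
      congr 1
      ext i
      rw [hP.2.2 i]; simp
    obtain ⟨e, he⟩ := Nat.exists_eq_succ_of_ne_zero hc2
    rw [he] at hc ⊢
    rw [← hc]
    simp only [gco, Nat.succ_eq_add_one, Nat.add_sub_cancel, Nat.factorial_succ]
    push_cast
    ring
  · intro h
    exact absurd (by simpa using hsing) h

theorem mul_nodup {X : Type} [DecidableEq X] (L : List X) (hL : L.Nodup) (F G : Finset X → ℝ) :
    mul L (fun A => F A.toFinset) (fun A => G A.toFinset) =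
      ∑ T ∈ L.toFinset.powerset, F T * G (L.toFinset \ T) := by
  induction L generalizing F G with
  | nil => simp [mul]
  | cons x L ih =>
    obtain ⟨hx, hL⟩ := List.nodup_cons.1 hL
    have hx' : x ∉ L.toFinset := by simpa using hx
    have h1 := ih hL (fun T => F (insert x T)) G
    have h2 := ih hL F (fun T => G (insert x T))
    simp only [mul]
    have e1 : D x (fun A : List X => F A.toFinset) = fun A => F (insert x A.toFinset) := by
      funext A; simp [D]
    have e2 : D x (fun A : List X => G A.toFinset) = fun A => G (insert x A.toFinset) := by
      funext A; simp [D]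
    rw [e1, e2, h1, h2, List.toFinset_cons, Finset.sum_powerset_insert hx', add_comm]
    congr 1
    · refine Finset.sum_congr rfl fun T hT => ?_
      rw [Finset.insert_sdiff_of_notMem _ (fun h => hx' (Finset.mem_powerset.1 hT h))]
    · refine Finset.sum_congr rfl fun T hT => ?_
      congr 2
      rw [Finset.insert_sdiff_insert]
      rw [Finset.sdiff_insert_of_notMem hx']

theorem kap_eq_cum (Z : List ℕ → ℝ) (ZF : Finset (Fin m) → ℝ) (k : Fin m → ℕ)
    (hZ : Z [] = 1) (hZF : ∀ A : List (Fin m), A.Nodup → Z (A.map k) = ZF A.toFinset)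
    (x : Fin m) (L : List (Fin m)) (hL : (x :: L).Nodup) :
    kap Z ((x :: L).map k) = cum ZF (x :: L).toFinset := by
  have hZF0 : ZF ∅ = 1 := by
    have := hZF [] List.nodup_nil
    simp [hZ] at this; exact this.symm
  have := cancel_sub L (fun A => D (k x) (kap Z) (A.map k)) (fun A => cum ZF (insert x A.toFinset))
    (fun A => Z (A.map k)) (by simpa using hZ) ?_
  · simpa [D] using this
  · intro A hA
    obtain ⟨hxL, hLn⟩ := List.nodup_cons.1 hL
    have hxA : x ∉ A := fun h => hxL (hA.subset h)
    have hAn : A.Nodup := hLn.sublist hA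
    rw [← mul_map k A (D (k x) (kap Z)) Z]
    have h1 := congrFun (kap_conv Z hZ (k x)) (A.map k)
    have h1' : mul (A.map k) (D (k x) (kap Z)) Z = Z ((x :: A).map k) := h1
    rw [h1', hZF _ (List.nodup_cons.2 ⟨hxA, hAn⟩), List.toFinset_cons, ← cum_rec ZF hZF0 _ x (by simpa using hxA),
      ← mul_nodup A hAn (fun T => cum ZF (insert x T)) ZF]
    have hcongr : ∀ (A : List (Fin m)) (f g g' : List (Fin m) → ℝ), (∀ B, B.Sublist A → g B = g' B) →
        mul A f g = mul A f g' := by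
      intro A
      induction A with
      | nil => intro f g g' h; simp [mul, h [] (List.Sublist.refl _)]
      | cons y A ih =>
        intro f g g' h
        simp only [mul]
        rw [ih (D y f) g g' (fun B hB => h B (hB.cons y)),
          ih f (D y g) (D y g') (fun B hB => h _ (hB.cons_cons y))]
    exact hcongr _ _ _ _ (fun B hB => (hZF B (hAn.sublist hB)).symm)

theorem jointCumulant_eq {Ω : Type*} [MeasurableSpace Ω] (μ : MeasureTheory.Measure Ω)
    (v : Fin m → Ω → ℝ) :
    jointCumulant μ (fun i ω => ((v i ω : ℝ) : ℂ)) =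
      ((cum (fun S => ∫ ω, ∏ i ∈ S, v i ω ∂μ) Finset.univ : ℝ) : ℂ) := by
  have hP : ∀ P : Finset (Finset (Fin m)), IsSetPartition P ↔ IsPart Finset.univ P := by
    intro P
    simp [IsSetPartition, IsPart]
  simp only [jointCumulant, cum, hP, gco]
  push_cast
  refine Finset.sum_congr rfl fun P _ => ?_
  congr 1
  refine Finset.prod_congr rfl fun S _ => ?_
  rw [← integral_complex_ofReal]
  push_cast
  rfl

end JC

open MeasureTheory
open scoped Classical
namespace JC

/-- the unit cube -/
def cube (N : ℕ) : Set (Fin N → ℝ) := Set.univ.pi fun _ : Fin N => Set.Icc (0 : ℝ) 1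

theorem mem_cube {N : ℕ} {x : Fin N → ℝ} : x ∈ cube N ↔ ∀ i, 0 ≤ x i ∧ x i ≤ 1 := by
  simp only [cube, Set.mem_univ_pi, Set.mem_Icc]

theorem measurableSet_cube (N : ℕ) : MeasurableSet (cube N) :=
  MeasurableSet.univ_pi fun _ => measurableSet_Icc

theorem isCompact_cube (N : ℕ) : IsCompact (cube N) :=
  isCompact_univ_pi fun _ => isCompact_Icc

theorem beta_integrable (a b : ℝ) (ha : 0 < a) (hb : 0 < b) :
    IntegrableOn (fun x : ℝ => x ^ (a - 1) * (1 - x) ^ (b - 1)) (Set.Icc 0 1) := by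
  have h := Complex.betaIntegral_convergent (u := (a : ℂ)) (v := (b : ℂ)) (by simpa using ha) (by simpa using hb)
  rw [intervalIntegrable_iff_integrableOn_Ioo_of_le zero_le_one] at h
  rw [integrableOn_Icc_iff_integrableOn_Ioo]
  refine (IntegrableOn.congr_fun h.norm ?_ measurableSet_Ioo)
  intro x hx
  have h1 : (0 : ℝ) < 1 - x := by linarith [hx.2]
  simp only [norm_mul]
  rw [Complex.norm_cpow_eq_rpow_re_of_pos hx.1]
  have : (1 - (x : ℂ)) = ((1 - x : ℝ) : ℂ) := by push_cast; rfl
  rw [this, Complex.norm_cpow_eq_rpow_re_of_pos h1]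
  simp

variable (θ α : ℝ) (M N : ℕ)

theorem density_nonneg {x : Fin N → ℝ} (hx : x ∈ cube N) : 0 ≤ jacobiDensity θ α M N x := by
  rw [mem_cube] at hx
  unfold jacobiDensity
  refine mul_nonneg (Finset.prod_nonneg fun p _ => Real.rpow_nonneg (abs_nonneg _) _)
    (Finset.prod_nonneg fun i _ => mul_nonneg (Real.rpow_nonneg (hx i).1 _)
      (Real.rpow_nonneg (by linarith [(hx i).2]) _))

theorem density_measurable : Measurable (jacobiDensity θ α M N) := by
  unfold jacobiDensity
  fun_prop

theorem density_integrable (hθ : 0 < θ) (hα : 0 < α) (hM : N ≤ M) :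
    IntegrableOn (jacobiDensity θ α M N) (cube N) := by
  have hb : 0 < θ * ((M : ℝ) - (N : ℝ)) + θ := by
    have : (N : ℝ) ≤ M := by exact_mod_cast hM
    have : 0 ≤ θ * ((M : ℝ) - N) := mul_nonneg hθ.le (by linarith)
    linarith
  have h1 := beta_integrable (θ * α) (θ * ((M : ℝ) - (N : ℝ)) + θ) (by positivity) hb
  have h2 : Integrable (fun x : Fin N → ℝ => ∏ i : Fin N, (x i ^ (θ * α - 1) * (1 - x i) ^ (θ * ((M : ℝ) - (N : ℝ)) + θ - 1)))
      (volume.restrict (cube N)) := by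
    rw [cube, volume_pi, Measure.restrict_pi_pi]
    exact Integrable.fintype_prod (fun _ => h1)
  refine Integrable.mono' h2 (density_measurable θ α M N).aestronglyMeasurable ?_
  filter_upwards [ae_restrict_mem (measurableSet_cube N)] with x hx
  rw [Real.norm_of_nonneg (density_nonneg θ α M N hx)]
  rw [mem_cube] at hx
  unfold jacobiDensity
  refine mul_le_of_le_one_left (Finset.prod_nonneg fun i _ => mul_nonneg (Real.rpow_nonneg (hx i).1 _)
      (Real.rpow_nonneg (by linarith [(hx i).2]) _)) ?_
  refine Finset.prod_le_one (fun p _ => Real.rpow_nonneg (abs_nonneg _) _) fun p _ => ?_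
  refine Real.rpow_le_one (abs_nonneg _) ?_ (by positivity)
  rw [abs_le]
  constructor <;> linarith [(hx p.1).1, (hx p.1).2, (hx p.2).1, (hx p.2).2]

theorem density_pos (hθ : 0 < θ) (hα : 0 < α) (hM : N ≤ M) :
    0 < ∫ x in cube N, jacobiDensity θ α M N x := by
  rw [setIntegral_pos_iff_support_of_nonneg_ae]
  · set U : Set (Fin N → ℝ) := {x | (∀ i, 0 < x i ∧ x i < 1) ∧ ∀ i j, i < j → x i < x j} with hU
    have hUo : IsOpen U := by
      have : U = (⋂ i, {x : Fin N → ℝ | 0 < x i} ∩ {x | x i < 1}) ∩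
          ⋂ i, ⋂ j, ⋂ (_ : i < j), {x : Fin N → ℝ | x i < x j} := by
        ext x; simp [hU]
      rw [this]
      refine IsOpen.inter (isOpen_iInter_of_finite fun i => IsOpen.inter ?_ ?_)
        (isOpen_iInter_of_finite fun i => isOpen_iInter_of_finite fun j => isOpen_iInter_of_finite fun _ => ?_)
      · exact isOpen_lt continuous_const (continuous_apply i)
      · exact isOpen_lt (continuous_apply i) continuous_const
      · exact isOpen_lt (continuous_apply i) (continuous_apply j)
    have hUn : U.Nonempty := by
      refine ⟨fun i => ((i : ℕ) + 1 : ℝ) / (N + 1), ?_, ?_⟩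
      · intro i
        have : ((i : ℕ) : ℝ) < N := by exact_mod_cast i.2
        constructor
        · positivity
        · rw [div_lt_one (by positivity)]; linarith
      · intro i j hij
        have : ((i : ℕ) : ℝ) < (j : ℕ) := by exact_mod_cast hij
        show ((i : ℕ) + 1 : ℝ) / (N + 1) < ((j : ℕ) + 1 : ℝ) / (N + 1)
        exact div_lt_div_of_pos_right (by linarith) (by positivity)
    refine (hUo.measure_pos volume hUn).trans_le (measure_mono ?_)
    intro x hx
    refine ⟨?_, mem_cube.2 fun i => ⟨(hx.1 i).1.le, (hx.1 i).2.le⟩⟩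
    rw [Function.mem_support]
    apply ne_of_gt
    unfold jacobiDensity
    refine mul_pos (Finset.prod_pos fun p hp => Real.rpow_pos_of_pos (abs_pos.2 ?_) _)
      (Finset.prod_pos fun i _ => mul_pos (Real.rpow_pos_of_pos (hx.1 i).1 _)
        (Real.rpow_pos_of_pos (by linarith [(hx.1 i).2]) _))
    have := hx.2 p.1 p.2 (by simpa using hp)
    exact (sub_neg.2 this).ne
  · filter_upwards [ae_restrict_mem (measurableSet_cube N)] with x hx
    exact density_nonneg θ α M N hx
  · exact density_integrable θ α M N hθ hα hM

theorem raw_univ (hθ : 0 < θ) (hα : 0 < α) (hM : N ≤ M) :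
    jacobiMeasureRaw θ α M N Set.univ = ENNReal.ofReal (∫ x in cube N, jacobiDensity θ α M N x) := by
  unfold jacobiMeasureRaw
  rw [withDensity_apply _ MeasurableSet.univ, Measure.restrict_univ]
  rw [ofReal_integral_eq_lintegral_ofReal (density_integrable θ α M N hθ hα hM)]
  · rfl
  · filter_upwards [ae_restrict_mem (measurableSet_cube N)] with x hx
    exact density_nonneg θ α M N hx

theorem ensemble_prob (hθ : 0 < θ) (hα : 0 < α) (hM : N ≤ M) :
    IsProbabilityMeasure (jacobiEnsemble θ α M N) := by
  constructor
  have hp := density_pos θ α M N hθ hα hM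
  unfold jacobiEnsemble
  rw [Measure.smul_apply, smul_eq_mul, raw_univ θ α M N hθ hα hM]
  exact ENNReal.inv_mul_cancel (by simpa using hp) ENNReal.ofReal_ne_top

theorem ensemble_integral (f : (Fin N → ℝ) → ℝ) :
    ∫ x, f x ∂(jacobiEnsemble θ α M N) = ((jacobiMeasureRaw θ α M N Set.univ)⁻¹).toReal *
      ∫ x in cube N, f x * jacobiDensity θ α M N x := by
  unfold jacobiEnsemble
  rw [integral_smul_measure, smul_eq_mul]
  congr 1
  unfold jacobiMeasureRaw
  rw [integral_withDensity_eq_integral_toReal_smul (by exact (density_measurable θ α M N).ennreal_ofReal)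
    (by simp)]
  refine integral_congr_ae ?_
  filter_upwards [ae_restrict_mem (measurableSet_cube N)] with x hx
  rw [ENNReal.toReal_ofReal (density_nonneg θ α M N hx), smul_eq_mul, mul_comm]

theorem ensemble_integrable (hθ : 0 < θ) (hα : 0 < α) (hM : N ≤ M) (f : (Fin N → ℝ) → ℝ)
    (hf : Continuous f) : Integrable f (jacobiEnsemble θ α M N) := by
  have := ensemble_prob θ α M N hθ hα hM
  obtain ⟨C, hC⟩ := (isCompact_cube N).exists_bound_of_continuousOn hf.continuousOn
  refine Integrable.of_bound hf.aestronglyMeasurable C ?_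
  have h1 : ∀ᵐ x ∂(volume.restrict (cube N)), ‖f x‖ ≤ C := by
    filter_upwards [ae_restrict_mem (measurableSet_cube N)] with x hx using hC x hx
  unfold jacobiEnsemble
  refine Measure.ae_smul_measure ?_ _
  exact (withDensity_absolutelyContinuous _ _).ae_le h1

end JC

open MeasureTheory
open scoped Classical
namespace JC

noncomputable def HH (k : ℕ) (x y : ℝ) : ℝ :=
  ∑ l ∈ Finset.range (k + 1), x ^ l * y ^ (k - l) - ∑ l ∈ Finset.range (k + 2), x ^ l * y ^ (k + 1 - l)

theorem HH_mul (k : ℕ) (x y : ℝ) :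
    HH k x y * (x - y) = (x ^ (k + 1) - x ^ (k + 2)) - (y ^ (k + 1) - y ^ (k + 2)) := by
  have h1 := (Commute.all x y).geom_sum₂_mul (k + 1)
  have h2 := (Commute.all x y).geom_sum₂_mul (k + 2)
  simp only [Nat.add_sub_cancel] at h1
  have h3 : k + 2 - 1 = k + 1 := rfl
  rw [h3] at h2
  rw [HH, sub_mul, h1, h2]; ring

theorem HH_diag (k : ℕ) (x : ℝ) : HH k x x = (k + 1) * x ^ k - (k + 2) * x ^ (k + 1) := by
  rw [HH]
  have h1 : ∀ l ∈ Finset.range (k + 1), x ^ l * x ^ (k - l) = x ^ k := by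
    intro l hl
    rw [← pow_add]; congr 1; have := Finset.mem_range.1 hl; omega
  have h2 : ∀ l ∈ Finset.range (k + 2), x ^ l * x ^ (k + 1 - l) = x ^ (k + 1) := by
    intro l hl
    rw [← pow_add]; congr 1; have := Finset.mem_range.1 hl; omega
  rw [Finset.sum_congr rfl h1, Finset.sum_congr rfl h2]
  simp

theorem HH_abs (k : ℕ) {x y : ℝ} (hx : 0 ≤ x ∧ x ≤ 1) (hy : 0 ≤ y ∧ y ≤ 1) :
    |HH k x y| ≤ 2 * k + 3 := by
  have key : ∀ n m : ℕ, 0 ≤ ∑ l ∈ Finset.range n, x ^ l * y ^ (m - l) ∧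
      ∑ l ∈ Finset.range n, x ^ l * y ^ (m - l) ≤ n := by
    intro n m
    constructor
    · exact Finset.sum_nonneg fun l _ => mul_nonneg (pow_nonneg hx.1 _) (pow_nonneg hy.1 _)
    · calc _ ≤ ∑ l ∈ Finset.range n, (1 : ℝ) := Finset.sum_le_sum fun l _ =>
            mul_le_one₀ (pow_le_one₀ hx.1 hx.2) (pow_nonneg hy.1 _) (pow_le_one₀ hy.1 hy.2)
        _ = n := by simp
  have h1 := key (k + 1) k
  have h2 := key (k + 2) (k + 1)
  push_cast at h1 h2
  have hk : (0 : ℝ) ≤ k := Nat.cast_nonneg k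
  rw [HH, abs_le]
  constructor <;> linarith [h1.1, h1.2, h2.1, h2.2]

noncomputable def phi (k : ℕ) (s x : ℝ) : ℝ := x + s * (x ^ (k + 1) - x ^ (k + 2))

theorem phi_sub (k : ℕ) (s x y : ℝ) : phi k s x - phi k s y = (x - y) * (1 + s * HH k x y) := by
  have := HH_mul k x y
  unfold phi
  linear_combination (-s) * this

theorem phi_fac (k : ℕ) (s x : ℝ) : phi k s x = x * (1 + s * (x ^ k * (1 - x))) := by
  unfold phi; ring

theorem one_sub_phi (k : ℕ) (s x : ℝ) : 1 - phi k s x = (1 - x) * (1 - s * x ^ (k + 1)) := by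
  unfold phi; ring

theorem pos_H {k : ℕ} {s x y : ℝ} (hs : |s| * (2 * k + 4) ≤ 1) (hx : 0 ≤ x ∧ x ≤ 1) (hy : 0 ≤ y ∧ y ≤ 1) :
    0 < 1 + s * HH k x y := by
  have h := HH_abs k hx hy
  have h1 : |s * HH k x y| < 1 := by
    rw [abs_mul]
    by_cases h0 : |s| = 0
    · rw [h0]; simp
    · have : 0 < |s| := lt_of_le_of_ne (abs_nonneg _) (Ne.symm h0)
      nlinarith
  linarith [(abs_lt.1 h1).1]

theorem abs_s_lt {k : ℕ} {s : ℝ} (hs : |s| * (2 * k + 4) ≤ 1) : |s| < 1 := by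
  have hk : (0 : ℝ) ≤ k := Nat.cast_nonneg k
  nlinarith [abs_nonneg s]

theorem pos_1 {k : ℕ} {s x : ℝ} (hs : |s| * (2 * k + 4) ≤ 1) (hx : 0 ≤ x ∧ x ≤ 1) :
    0 < 1 + s * (x ^ k * (1 - x)) := by
  have h1 := abs_s_lt hs
  have h2 : |x ^ k * (1 - x)| ≤ 1 := by
    rw [abs_of_nonneg (mul_nonneg (pow_nonneg hx.1 _) (by linarith [hx.2]))]
    exact mul_le_one₀ (pow_le_one₀ hx.1 hx.2) (by linarith [hx.2]) (by linarith [hx.1])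
  have h3 : |s * (x ^ k * (1 - x))| < 1 := by
    rw [abs_mul]; nlinarith [abs_nonneg s, abs_nonneg (x ^ k * (1 - x))]
  linarith [(abs_lt.1 h3).1]

theorem pos_2 {k : ℕ} {s x : ℝ} (hs : |s| * (2 * k + 4) ≤ 1) (hx : 0 ≤ x ∧ x ≤ 1) :
    0 < 1 - s * x ^ (k + 1) := by
  have h1 := abs_s_lt hs
  have h2 : |x ^ (k + 1)| ≤ 1 := by
    rw [abs_of_nonneg (pow_nonneg hx.1 _)]
    exact pow_le_one₀ hx.1 hx.2
  have h3 : |s * x ^ (k + 1)| < 1 := by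
    rw [abs_mul]; nlinarith [abs_nonneg s, abs_nonneg (x ^ (k + 1))]
  linarith [(abs_lt.1 h3).2]

noncomputable def Phi (k : ℕ) {N : ℕ} (s : ℝ) (x : Fin N → ℝ) : Fin N → ℝ := fun i => phi k s (x i)

theorem phi_mem {k : ℕ} {s x : ℝ} (hs : |s| * (2 * k + 4) ≤ 1) (hx : 0 ≤ x ∧ x ≤ 1) :
    0 ≤ phi k s x ∧ phi k s x ≤ 1 := by
  constructor
  · rw [phi_fac]; exact mul_nonneg hx.1 (pos_1 hs hx).le
  · have := one_sub_phi k s x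
    have h2 : 0 ≤ (1 - x) * (1 - s * x ^ (k + 1)) := mul_nonneg (by linarith [hx.2]) (pos_2 hs hx).le
    linarith

theorem Phi_injOn {k N : ℕ} {s : ℝ} (hs : |s| * (2 * k + 4) ≤ 1) : Set.InjOn (Phi k s) (cube N) := by
  intro x hx y hy hxy
  rw [mem_cube] at hx hy
  funext i
  have h1 : phi k s (x i) = phi k s (y i) := congrFun hxy i
  have h2 := phi_sub k s (x i) (y i)
  rw [h1, sub_self] at h2
  rcases mul_eq_zero.1 h2.symm with h | h
  · linarith
  · exact absurd h (pos_H hs (hx i) (hy i)).ne'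

theorem Phi_image {k N : ℕ} {s : ℝ} (hs : |s| * (2 * k + 4) ≤ 1) : Phi k s '' (cube N) = cube N := by
  apply Set.Subset.antisymm
  · rintro _ ⟨x, hx, rfl⟩
    rw [mem_cube] at hx ⊢
    exact fun i => phi_mem hs (hx i)
  · intro y hy
    rw [mem_cube] at hy
    have : ∀ i, ∃ t, (0 ≤ t ∧ t ≤ 1) ∧ phi k s t = y i := by
      intro i
      have hc : ContinuousOn (phi k s) (Set.Icc 0 1) := by unfold phi; fun_prop
      have h := intermediate_value_Icc (zero_le_one' ℝ) hc
      have h0 : phi k s 0 = 0 := by simp [phi]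
      have h1 : phi k s 1 = 1 := by simp [phi]
      rw [h0, h1] at h
      obtain ⟨t, ht, h⟩ := h (hy i)
      exact ⟨t, ht, h⟩
    choose x hx hxy using this
    exact ⟨x, mem_cube.2 hx, funext hxy⟩

noncomputable def Fprod {N : ℕ} (L : List ℕ) (x : Fin N → ℝ) : ℝ := (L.map fun j => ∑ i, x i ^ j).prod

theorem Fprod_cons {N : ℕ} (j : ℕ) (L : List ℕ) (x : Fin N → ℝ) :
    Fprod (j :: L) x = (∑ i, x i ^ j) * Fprod L x := by simp [Fprod]

theorem Fprod_nil {N : ℕ} (x : Fin N → ℝ) : Fprod [] x = 1 := by simp [Fprod]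

/-- the reweighting factor -/
noncomputable def RR (θ α : ℝ) (M N : ℕ) (k : ℕ) (q : ℝ × (Fin N → ℝ)) : ℝ :=
  ((∏ p ∈ Finset.univ.filter (fun p : Fin N × Fin N => p.1 < p.2),
      (1 + q.1 * HH k (q.2 p.1) (q.2 p.2)) ^ (2 * θ)) *
    ∏ i : Fin N, ((1 + q.1 * (q.2 i ^ k * (1 - q.2 i))) ^ (θ * α - 1) *
      (1 - q.1 * q.2 i ^ (k + 1)) ^ (θ * ((M : ℝ) - (N : ℝ)) + θ - 1))) *
    ∏ i : Fin N, (1 + q.1 * HH k (q.2 i) (q.2 i))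

theorem density_Phi (θ α : ℝ) (M N k : ℕ) {s : ℝ} (hs : |s| * (2 * k + 4) ≤ 1) {x : Fin N → ℝ} (hx : x ∈ cube N) :
    (∏ i : Fin N, (1 + s * HH k (x i) (x i))) * jacobiDensity θ α M N (Phi k s x)
      = RR θ α M N k (s, x) * jacobiDensity θ α M N x := by
  rw [mem_cube] at hx
  have h1 : ∀ p ∈ Finset.univ.filter (fun p : Fin N × Fin N => p.1 < p.2),
      |Phi k s x p.1 - Phi k s x p.2| ^ (2 * θ) =
        |x p.1 - x p.2| ^ (2 * θ) * (1 + s * HH k (x p.1) (x p.2)) ^ (2 * θ) := by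
    intro p _
    have hp := pos_H hs (hx p.1) (hx p.2)
    simp only [Phi]
    rw [phi_sub, abs_mul, abs_of_pos hp, Real.mul_rpow (abs_nonneg _) hp.le]
  have h2 : ∀ i ∈ (Finset.univ : Finset (Fin N)), Phi k s x i ^ (θ * α - 1) * (1 - Phi k s x i) ^ (θ * ((M : ℝ) - (N : ℝ)) + θ - 1) =
      (x i ^ (θ * α - 1) * (1 - x i) ^ (θ * ((M : ℝ) - (N : ℝ)) + θ - 1)) *
      ((1 + s * (x i ^ k * (1 - x i))) ^ (θ * α - 1) *
      (1 - s * x i ^ (k + 1)) ^ (θ * ((M : ℝ) - (N : ℝ)) + θ - 1)) := by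
    intro i _
    simp only [Phi]
    rw [one_sub_phi, phi_fac, Real.mul_rpow (hx i).1 (pos_1 hs (hx i)).le,
      Real.mul_rpow (by linarith [(hx i).2]) (pos_2 hs (hx i)).le]
    ring
  unfold jacobiDensity RR
  rw [Finset.prod_congr rfl h1, Finset.prod_congr rfl h2, Finset.prod_mul_distrib, Finset.prod_mul_distrib (f := fun i => (x i ^ (θ * α - 1) * (1 - x i) ^ (θ * ((M : ℝ) - (N : ℝ)) + θ - 1)))]
  ring

theorem change_var (θ α : ℝ) (M N k : ℕ) {s : ℝ} (hs : |s| * (2 * k + 4) ≤ 1) (F : (Fin N → ℝ) → ℝ) :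
    ∫ x in cube N, F x * jacobiDensity θ α M N x =
    ∫ x in cube N, (F (Phi k s x) * RR θ α M N k (s, x)) * jacobiDensity θ α M N x := by
  have hd : ∀ x ∈ cube N, HasFDerivWithinAt (Phi k s) (ContinuousLinearMap.pi fun i =>
      (ContinuousLinearMap.toSpanSingleton ℝ (1 + s * HH k (x i) (x i))).comp (ContinuousLinearMap.proj i)) (cube N) x := by
    intro x _
    apply HasFDerivAt.hasFDerivWithinAt
    rw [hasFDerivAt_pi]
    intro i
    have h1 : HasDerivAt (phi k s) (1 + s * HH k (x i) (x i)) (x i) := by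
      unfold phi
      rw [HH_diag]
      have := (hasDerivAt_id (x i)).add (((hasDerivAt_pow (k + 1) (x i)).sub (hasDerivAt_pow (k + 2) (x i))).const_mul s)
      refine HasDerivAt.congr_deriv this ?_
      push_cast
      rfl
    exact h1.hasFDerivAt.comp x (ContinuousLinearMap.proj (R := ℝ) (φ := fun _ : Fin N => ℝ) i).hasFDerivAt
  have h := integral_image_eq_integral_abs_det_fderiv_smul volume (measurableSet_cube N) hd (Phi_injOn hs)
    (fun x => F x * jacobiDensity θ α M N x)
  rw [Phi_image hs] at h
  rw [h]
  refine setIntegral_congr_fun (measurableSet_cube N) fun x hx => ?_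
  have hdet : |(ContinuousLinearMap.pi fun i =>
      (ContinuousLinearMap.toSpanSingleton ℝ (1 + s * HH k (x i) (x i))).comp (ContinuousLinearMap.proj (R := ℝ) (φ := fun _ : Fin N => ℝ) i)).det|
      = ∏ i : Fin N, (1 + s * HH k (x i) (x i)) := by
    rw [ContinuousLinearMap.det_pi]
    have : ∀ c : ℝ, (ContinuousLinearMap.toSpanSingleton ℝ c).det = c := by
      intro c; simp
    simp only [this]
    rw [abs_of_nonneg]
    rw [mem_cube] at hx
    exact Finset.prod_nonneg fun i _ => (pos_H hs (hx i) (hx i)).le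
  rw [hdet, smul_eq_mul]
  have := density_Phi θ α M N k hs hx
  calc _ = F (Phi k s x) * ((∏ i : Fin N, (1 + s * HH k (x i) (x i))) * jacobiDensity θ α M N (Phi k s x)) := by ring
    _ = _ := by rw [this]; ring

end JC

open MeasureTheory
open scoped Classical
namespace JC

theorem deriv_zero {N : ℕ} (G : ℝ × (Fin N → ℝ) → ℝ) (w : (Fin N → ℝ) → ℝ) (hw : IntegrableOn w (cube N))
    (hwm : Measurable w)
    (δ : ℝ) (hδ : 0 < δ) (hG : ∀ s : ℝ, |s| ≤ δ → ∀ x ∈ cube N, ContDiffAt ℝ 1 G (s, x)) (c : ℝ)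
    (hc : ∀ s : ℝ, |s| ≤ δ → ∫ x in cube N, G (s, x) * w x = c)
    (g : (Fin N → ℝ) → ℝ) (hg : ∀ x ∈ cube N, HasDerivAt (fun s => G (s, x)) (g x) 0) :
    ∫ x in cube N, g x * w x = 0 := by
  have hpar : ∀ s : ℝ, |s| ≤ δ → ∀ x ∈ cube N,
      HasDerivAt (fun s => G (s, x)) (fderiv ℝ G (s, x) (1, 0)) s := by
    intro s hs x hx
    have h1 : HasFDerivAt G (fderiv ℝ G (s, x)) (s, x) :=
      ((hG s hs x hx).differentiableAt (by norm_num)).hasFDerivAt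
    have h2 : HasDerivAt (fun s : ℝ => (s, x)) ((1 : ℝ), (0 : Fin N → ℝ)) s :=
      (hasDerivAt_id s).prodMk (hasDerivAt_const s x)
    exact h1.comp_hasDerivAt s h2
  have hK : IsCompact (Set.Icc (-δ) δ ×ˢ cube N) := isCompact_Icc.prod (isCompact_cube N)
  have hcont : ContinuousOn (fun q => fderiv ℝ G q (1, 0)) (Set.Icc (-δ) δ ×ˢ cube N) := by
    intro q hq
    have h := (hG q.1 (abs_le.2 hq.1) q.2 hq.2)
    have h2 : ContinuousAt (fderiv ℝ G) q := (h.fderiv_right (m := 0) (by norm_num)).continuousAt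
    exact (h2.clm_apply continuousAt_const).continuousWithinAt
  obtain ⟨C, hC⟩ := hK.exists_bound_of_continuousOn hcont
  have hslice : ∀ s : ℝ, |s| ≤ δ → AEStronglyMeasurable (fun x => G (s, x) * w x) (volume.restrict (cube N)) := by
    intro s hs
    refine AEStronglyMeasurable.mul ?_ hwm.aestronglyMeasurable
    refine ContinuousOn.aestronglyMeasurable ?_ (measurableSet_cube N)
    intro x hx
    have h1 : ContinuousAt G (s, x) := (hG s hs x hx).continuousAt
    have h2 : ContinuousAt (fun x : Fin N → ℝ => (s, x)) x := by fun_prop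
    exact (ContinuousAt.comp (f := fun x : Fin N → ℝ => (s, x)) h1 h2).continuousWithinAt
  have h0 : |(0 : ℝ)| ≤ δ := by simpa using hδ.le
  have hzeroInt : Integrable (fun x => G (0, x) * w x) (volume.restrict (cube N)) := by
    have hc0 : ContinuousOn (fun x => G (0, x)) (cube N) := by
      intro x hx
      have h1 : ContinuousAt G (0, x) := (hG 0 h0 x hx).continuousAt
      have h2 : ContinuousAt (fun x : Fin N → ℝ => ((0 : ℝ), x)) x := by fun_prop
      exact (ContinuousAt.comp (f := fun x : Fin N → ℝ => ((0 : ℝ), x)) h1 h2).continuousWithinAt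
    exact IntegrableOn.continuousOn_mul hc0 hw (isCompact_cube N)
  have hmain := hasDerivAt_integral_of_dominated_loc_of_deriv_le (𝕜 := ℝ) (μ := volume.restrict (cube N))
    (F := fun s x => G (s, x) * w x) (F' := fun s x => fderiv ℝ G (s, x) (1, 0) * w x) (x₀ := 0)
    (s := Set.Icc (-δ) δ) (bound := fun x => C * ‖w x‖)
    (Icc_mem_nhds (by linarith) hδ)
    (by
      filter_upwards [Icc_mem_nhds (show -δ < 0 by linarith) hδ] with s hs
      exact hslice s (abs_le.2 hs))
    hzeroInt
    (by
      refine AEStronglyMeasurable.mul ?_ hwm.aestronglyMeasurable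
      refine ContinuousOn.aestronglyMeasurable ?_ (measurableSet_cube N)
      refine ContinuousOn.comp (f := fun x : Fin N → ℝ => ((0 : ℝ), x)) hcont (by fun_prop) ?_
      intro x hx
      exact ⟨⟨by linarith, hδ.le⟩, hx⟩)
    (by
      filter_upwards [ae_restrict_mem (measurableSet_cube N)] with x hx s hs
      rw [norm_mul]
      exact mul_le_mul_of_nonneg_right (hC (s, x) ⟨hs, hx⟩) (norm_nonneg _))
    (hw.norm.const_mul C)
    (by
      filter_upwards [ae_restrict_mem (measurableSet_cube N)] with x hx s hs
      exact (hpar s (abs_le.2 hs) x hx).mul_const (w x))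
  have h1 := hmain.2
  have h2 : HasDerivAt (fun s : ℝ => ∫ x in cube N, G (s, x) * w x) 0 0 := by
    refine (hasDerivAt_const (0 : ℝ) c).congr_of_eventuallyEq ?_
    filter_upwards [Icc_mem_nhds (show -δ < 0 by linarith) hδ] with s hs
    exact hc s (abs_le.2 hs)
  rw [← h1.unique h2]
  refine setIntegral_congr_fun (measurableSet_cube N) fun x hx => ?_
  have := (hg x hx).unique (hpar 0 h0 x hx)
  simp only [this]

theorem HH_contDiff (k : ℕ) : ContDiff ℝ 1 (fun q : ℝ × ℝ => HH k q.1 q.2) := by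
  unfold HH; fun_prop

theorem Fprod_contDiff {N : ℕ} (L : List ℕ) : ContDiff ℝ 1 (fun x : Fin N → ℝ => Fprod L x) := by
  induction L with
  | nil => simp only [Fprod_nil]; fun_prop
  | cons j L ih => simp only [Fprod_cons]; fun_prop

theorem Phi_contDiff {N : ℕ} (k : ℕ) : ContDiff ℝ 1 (fun q : ℝ × (Fin N → ℝ) => Phi k q.1 q.2) := by
  unfold Phi phi; fun_prop

theorem GG_contDiffAt (θ α : ℝ) (M N k : ℕ) (L : List ℕ) {s : ℝ} (hs : |s| * (2 * k + 4) ≤ 1) {x : Fin N → ℝ}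
    (hx : x ∈ cube N) :
    ContDiffAt ℝ 1 (fun q : ℝ × (Fin N → ℝ) => Fprod L (Phi k q.1 q.2) * RR θ α M N k q) (s, x) := by
  rw [mem_cube] at hx
  have hHH : ∀ i j : Fin N, ContDiff ℝ 1 (fun q : ℝ × (Fin N → ℝ) => HH k (q.2 i) (q.2 j)) := by
    intro i j
    exact (HH_contDiff k).comp (f := fun q : ℝ × (Fin N → ℝ) => (q.2 i, q.2 j)) (by fun_prop)
  refine ContDiffAt.mul ((Fprod_contDiff L).comp (Phi_contDiff k)).contDiffAt ?_
  unfold RR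
  refine ContDiffAt.mul (ContDiffAt.mul (contDiffAt_prod fun p _ => ?_) (contDiffAt_prod fun i _ => ContDiffAt.mul ?_ ?_))
    (contDiffAt_prod fun i _ => ?_)
  · refine ContDiffAt.rpow_const_of_ne ?_ (pos_H hs (hx p.1) (hx p.2)).ne'
    exact (contDiff_const.add (contDiff_fst.mul (hHH _ _))).contDiffAt
  · refine ContDiffAt.rpow_const_of_ne ?_ (pos_1 hs (hx i)).ne'
    fun_prop
  · refine ContDiffAt.rpow_const_of_ne ?_ (pos_2 hs (hx i)).ne'
    fun_prop
  · exact (contDiff_const.add (contDiff_fst.mul (hHH _ _))).contDiffAt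

theorem prod_deriv_one {ι : Type*} (u : Finset ι) (f : ι → ℝ → ℝ) (f' : ι → ℝ) (h1 : ∀ i ∈ u, f i 0 = 1)
    (hf : ∀ i ∈ u, HasDerivAt (f i) (f' i) 0) :
    HasDerivAt (fun s => ∏ i ∈ u, f i s) (∑ i ∈ u, f' i) 0 := by
  refine (HasDerivAt.fun_finsetProd hf).congr_deriv ?_
  refine Finset.sum_congr rfl fun i _ => ?_
  rw [Finset.prod_eq_one fun j hj => h1 j (Finset.mem_of_mem_erase hj), one_smul]

theorem aff_deriv (c : ℝ) : HasDerivAt (fun s : ℝ => 1 + s * c) c 0 := by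
  simpa using ((hasDerivAt_id (0 : ℝ)).mul_const c).const_add 1

theorem aff_rpow_deriv (c p : ℝ) : HasDerivAt (fun s : ℝ => (1 + s * c) ^ p) (p * c) 0 := by
  have := (aff_deriv c).rpow_const (p := p) (Or.inl (by simp))
  refine this.congr_deriv ?_
  simp; ring

noncomputable def dF {N : ℕ} (k : ℕ) : List ℕ → (Fin N → ℝ) → ℝ
  | [], _ => 0
  | j :: L, x => (j : ℝ) * ((∑ i, x i ^ (k + j)) - ∑ i, x i ^ (k + 1 + j)) * Fprod L x + (∑ i, x i ^ j) * dF k L x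

theorem Phi_zero {N : ℕ} (k : ℕ) (x : Fin N → ℝ) : Phi k 0 x = x := by
  funext i; simp [Phi, phi]

theorem Fprod_deriv {N : ℕ} (k : ℕ) (L : List ℕ) (x : Fin N → ℝ) :
    HasDerivAt (fun s => Fprod L (Phi k s x)) (dF k L x) 0 := by
  induction L with
  | nil => simp only [Fprod_nil, dF]; exact hasDerivAt_const _ _
  | cons j L ih =>
    simp only [Fprod_cons, dF]
    have h1 : HasDerivAt (fun s => ∑ i, Phi k s x i ^ j) ((j : ℝ) * ((∑ i, x i ^ (k + j)) - ∑ i, x i ^ (k + 1 + j))) 0 := by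
      have : ∀ i ∈ (Finset.univ : Finset (Fin N)), HasDerivAt (fun s => Phi k s x i ^ j) ((j : ℝ) * (x i ^ (k + j) - x i ^ (k + 1 + j))) 0 := by
        intro i _
        have h2 : HasDerivAt (fun s => Phi k s x i) (x i ^ (k + 1) - x i ^ (k + 2)) 0 := by
          simpa [Phi, phi] using ((hasDerivAt_id (0 : ℝ)).mul_const (x i ^ (k + 1) - x i ^ (k + 2))).const_add (x i)
        refine (h2.fun_pow j).congr_deriv ?_
        rw [Phi_zero]
        rcases j with _ | j
        · simp
        · simp only [Nat.add_sub_cancel]; push_cast; ring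
      refine (HasDerivAt.fun_sum this).congr_deriv ?_
      rw [← Finset.mul_sum, Finset.sum_sub_distrib]
    refine (h1.mul ih).congr_deriv ?_
    rw [Phi_zero]

noncomputable def dR (θ α : ℝ) (M N k : ℕ) (x : Fin N → ℝ) : ℝ :=
  (∑ p ∈ Finset.univ.filter (fun p : Fin N × Fin N => p.1 < p.2), (2 * θ) * HH k (x p.1) (x p.2)) +
    (∑ i, ((θ * α - 1) * (x i ^ k * (1 - x i)) - (θ * ((M : ℝ) - (N : ℝ)) + θ - 1) * x i ^ (k + 1))) +
    ∑ i, HH k (x i) (x i)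

theorem RR_deriv (θ α : ℝ) (M N k : ℕ) (x : Fin N → ℝ) :
    RR θ α M N k (0, x) = 1 ∧ HasDerivAt (fun s => RR θ α M N k (s, x)) (dR θ α M N k x) 0 := by
  constructor
  · simp [RR]
  unfold RR dR
  have h1 := prod_deriv_one (Finset.univ.filter (fun p : Fin N × Fin N => p.1 < p.2))
    (fun p s => (1 + s * HH k (x p.1) (x p.2)) ^ (2 * θ)) _ (by simp) (fun p _ => aff_rpow_deriv _ _)
  have h2 := prod_deriv_one (Finset.univ : Finset (Fin N))
    (fun i s => (1 + s * (x i ^ k * (1 - x i))) ^ (θ * α - 1) *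
      (1 - s * x i ^ (k + 1)) ^ (θ * ((M : ℝ) - (N : ℝ)) + θ - 1))
    (fun i => (θ * α - 1) * (x i ^ k * (1 - x i)) - (θ * ((M : ℝ) - (N : ℝ)) + θ - 1) * x i ^ (k + 1)) (by simp) (fun i _ => by
      have h3 := aff_rpow_deriv (x i ^ k * (1 - x i)) (θ * α - 1)
      have h4 := aff_rpow_deriv (- x i ^ (k + 1)) (θ * ((M : ℝ) - (N : ℝ)) + θ - 1)
      have h5 := h3.mul h4
      refine (h5.congr_of_eventuallyEq ?_).congr_deriv ?_
      · refine Filter.Eventually.of_forall fun s => ?_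
        simp only [Pi.mul_apply]
        rw [mul_neg, ← sub_eq_add_neg]
      · simp; ring)
  have h3 := prod_deriv_one (Finset.univ : Finset (Fin N))
    (fun i s => (1 + s * HH k (x i) (x i))) _ (by simp) (fun p _ => aff_deriv _)
  refine ((h1.mul h2).mul h3).congr_deriv ?_
  simp

theorem loop_raw (θ α : ℝ) (M N k : ℕ) (hθ : 0 < θ) (hα : 0 < α) (hM : N ≤ M) (L : List ℕ) :
    ∫ x in cube N, (dF k L x + Fprod L x * dR θ α M N k x) * jacobiDensity θ α M N x = 0 := by
  have hpos : (0 : ℝ) < 2 * k + 4 := by positivity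
  have hs : ∀ s : ℝ, |s| ≤ 1 / (2 * k + 4) → |s| * (2 * k + 4) ≤ 1 := by
    intro s h
    rwa [le_div_iff₀ hpos] at h
  refine deriv_zero (fun q => Fprod L (Phi k q.1 q.2) * RR θ α M N k q) (jacobiDensity θ α M N)
    (density_integrable θ α M N hθ hα hM) (density_measurable θ α M N) (1 / (2 * k + 4)) (by positivity)
    (fun s h x hx => GG_contDiffAt θ α M N k L (hs s h) hx)
    (∫ x in cube N, Fprod L x * jacobiDensity θ α M N x)
    (fun s h => (change_var θ α M N k (hs s h) (Fprod L)).symm) _ ?_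
  intro x _
  have h := RR_deriv θ α M N k x
  refine ((Fprod_deriv k L x).mul h.2).congr_deriv ?_
  rw [Phi_zero, h.1, mul_one]

end JC

open MeasureTheory
open scoped Classical
namespace JC

theorem HH_symm (k : ℕ) (x y : ℝ) : HH k x y = HH k y x := by
  have h1 := (Commute.all x y).geom_sum₂_comm (k + 1)
  have h2 := (Commute.all x y).geom_sum₂_comm (k + 2)
  simp only [Nat.add_sub_cancel] at h1
  have h3 : k + 2 - 1 = k + 1 := rfl
  rw [h3] at h2
  rw [HH, HH, h1, h2]

theorem sum_pairs {N : ℕ} (f : Fin N → Fin N → ℝ) (hf : ∀ i j, f i j = f j i) :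
    2 * ∑ p ∈ Finset.univ.filter (fun p : Fin N × Fin N => p.1 < p.2), f p.1 p.2 =
      (∑ i, ∑ j, f i j) - ∑ i, f i i := by
  have h1 : ∑ i, ∑ j, f i j = ∑ p : Fin N × Fin N, f p.1 p.2 := by
    rw [Fintype.sum_prod_type]
  have h2 : ∑ p ∈ Finset.univ.filter (fun p : Fin N × Fin N => p.2 < p.1), f p.1 p.2
      = ∑ p ∈ Finset.univ.filter (fun p : Fin N × Fin N => p.1 < p.2), f p.1 p.2 := by
    refine Finset.sum_nbij' Prod.swap Prod.swap ?_ ?_ ?_ ?_ ?_ <;> simp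
    intro a b _; exact hf a b
  have h3 : ∑ p ∈ Finset.univ.filter (fun p : Fin N × Fin N => p.1 = p.2), f p.1 p.2 = ∑ i, f i i := by
    refine Finset.sum_nbij' Prod.fst (fun i => (i, i)) ?_ ?_ ?_ ?_ ?_ <;> simp
  have h4 : ∀ p : Fin N × Fin N, f p.1 p.2 = (if p.1 < p.2 then f p.1 p.2 else 0) +
      (if p.2 < p.1 then f p.1 p.2 else 0) + if p.1 = p.2 then f p.1 p.2 else 0 := by
    intro p
    rcases lt_trichotomy p.1 p.2 with h | h | h
    · simp [h, h.ne, h.le]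
    · simp [h]
    · simp [h, h.ne', h.le]
  have h5 : ∑ p : Fin N × Fin N, f p.1 p.2 = _ := Finset.sum_congr rfl fun p _ => h4 p
  rw [Finset.sum_add_distrib, Finset.sum_add_distrib,
    ← Finset.sum_filter, ← Finset.sum_filter, ← Finset.sum_filter, h2, h3] at h5
  rw [h1, h5]
  ring

theorem sum_HH {N : ℕ} (k : ℕ) (x : Fin N → ℝ) : ∑ i, ∑ j, HH k (x i) (x j) =
    ∑ l ∈ Finset.range (k + 1), (∑ i, x i ^ l) * (∑ i, x i ^ (k - l)) -
      ∑ l ∈ Finset.range (k + 2), (∑ i, x i ^ l) * (∑ i, x i ^ (k + 1 - l)) := by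
  have key : ∀ n m : ℕ, ∑ i, ∑ j, ∑ l ∈ Finset.range n, x i ^ l * x j ^ (m - l) =
      ∑ l ∈ Finset.range n, (∑ i, x i ^ l) * (∑ i, x i ^ (m - l)) := by
    intro n m
    simp only [Finset.sum_mul_sum]
    rw [Finset.sum_comm (s := Finset.range n)]
    refine Finset.sum_congr rfl fun i _ => ?_
    rw [Finset.sum_comm]
  simp only [HH, Finset.sum_sub_distrib]
  rw [key, key]

theorem dR_eq (θ α : ℝ) (M N k : ℕ) (x : Fin N → ℝ) : dR θ α M N k x =
    θ * (∑ l ∈ Finset.range (k + 1), (∑ i, x i ^ l) * (∑ i, x i ^ (k - l)) -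
      ∑ l ∈ Finset.range (k + 2), (∑ i, x i ^ l) * (∑ i, x i ^ (k + 1 - l))) +
    (-θ * (k + 1) + (θ * α - 1) + (k + 1)) * (∑ i, x i ^ k) +
    (θ * (k + 2) - (θ * α - 1) - ((θ * ((M : ℝ) - N) + θ) - 1) - (k + 2)) * (∑ i, x i ^ (k + 1)) := by
  have h1 := sum_pairs (fun i j => HH k (x i) (x j)) (fun i j => HH_symm k _ _)
  rw [sum_HH] at h1
  have h2 : ∑ i, HH k (x i) (x i) = (k + 1) * (∑ i, x i ^ k) - (k + 2) * ∑ i, x i ^ (k + 1) := by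
    simp only [HH_diag, Finset.sum_sub_distrib, Finset.mul_sum]
  have h3 : ∑ i, ((θ * α - 1) * (x i ^ k * (1 - x i)) - (θ * ((M : ℝ) - (N : ℝ)) + θ - 1) * x i ^ (k + 1)) =
      (θ * α - 1) * ((∑ i, x i ^ k) - ∑ i, x i ^ (k + 1)) - (θ * ((M : ℝ) - (N : ℝ)) + θ - 1) * ∑ i, x i ^ (k + 1) := by
    rw [← Finset.sum_sub_distrib, Finset.mul_sum, Finset.mul_sum, ← Finset.sum_sub_distrib]
    refine Finset.sum_congr rfl fun i _ => by ring
  rw [dR, ← Finset.mul_sum, h3, h2]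
  rw [h2] at h1
  linear_combination θ * h1

theorem dF_SS {N : ℕ} (k : ℕ) (x : Fin N → ℝ) (L : List ℕ) : ∀ G : ℝ, G * dF k L x =
    SS (fun (y : ℕ) (A : List ℕ) => G * ((y : ℝ) * (Fprod ((k + y) :: A) x - Fprod ((k + 1 + y) :: A) x))) L := by
  induction L with
  | nil => intro G; simp [SS, dF]
  | cons j L ih =>
    intro G
    rw [dF, SS]
    have h := ih (G * ∑ i, x i ^ j)
    have h2 : (fun (y : ℕ) => D j (fun (A : List ℕ) => G * ((y : ℝ) * (Fprod ((k + y) :: A) x - Fprod ((k + 1 + y) :: A) x)))) =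
      (fun (y : ℕ) (A : List ℕ) => (G * ∑ i, x i ^ j) * ((y : ℝ) * (Fprod ((k + y) :: A) x - Fprod ((k + 1 + y) :: A) x))) := by
      funext y A
      simp only [D, Fprod_cons]; ring
    rw [h2, ← h]
    simp only [Fprod_cons]; ring

theorem SS_continuous {N : ℕ} (L : List ℕ) : ∀ (f : ℕ → List ℕ → (Fin N → ℝ) → ℝ), (∀ y A, Continuous (f y A)) →
    Continuous (fun x => SS (fun y A => f y A x) L) := by
  induction L with
  | nil => intro f _; simp only [SS]; exact continuous_const
  | cons j L ih =>
    intro f hf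
    simp only [SS]
    exact (hf j L).add (ih (fun y A => f y (j :: A)) (fun y A => hf y _))

theorem SS_integral {N : ℕ} (μ : Measure (Fin N → ℝ)) (hμ : ∀ f : (Fin N → ℝ) → ℝ, Continuous f → Integrable f μ)
    (L : List ℕ) : ∀ (f : ℕ → List ℕ → (Fin N → ℝ) → ℝ), (∀ y A, Continuous (f y A)) →
    ∫ x, SS (fun y A => f y A x) L ∂μ = SS (fun y A => ∫ x, f y A x ∂μ) L := by
  induction L with
  | nil => intro f _; simp [SS]
  | cons j L ih =>
    intro f hf
    simp only [SS]
    have h := ih (fun y A => f y (j :: A)) (fun y A => hf y _)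
    have hc := SS_continuous L (fun y A => f y (j :: A)) (fun y A => hf y _)
    have h2 := integral_add (hμ _ (hf j L)) (hμ _ hc)
    rw [h] at h2
    exact h2

theorem Fprod_continuous {N : ℕ} (L : List ℕ) : Continuous (fun x : Fin N → ℝ => Fprod L x) :=
  (Fprod_contDiff L).continuous

noncomputable def ZZ (θ α : ℝ) (M N : ℕ) (L : List ℕ) : ℝ := ∫ x, Fprod L x ∂(jacobiEnsemble θ α M N)

theorem integral_comb {Ω : Type*} [MeasurableSpace Ω] (μ : Measure Ω) {f1 f2 f3 f4 f5 : Ω → ℝ} (c1 c2 c3 : ℝ)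
    (h1 : Integrable f1 μ) (h2 : Integrable f2 μ) (h3 : Integrable f3 μ) (h4 : Integrable f4 μ)
    (h5 : Integrable f5 μ) :
    ∫ x, (c1 * (f1 x - f2 x) + c2 * f3 x + c3 * f4 x + f5 x) ∂μ =
      c1 * (∫ x, f1 x ∂μ - ∫ x, f2 x ∂μ) + c2 * ∫ x, f3 x ∂μ + c3 * ∫ x, f4 x ∂μ + ∫ x, f5 x ∂μ := by
  have e1 : Integrable (fun x => c1 * (f1 x - f2 x)) μ := (h1.sub h2).const_mul c1
  have e2 : Integrable (fun x => c1 * (f1 x - f2 x) + c2 * f3 x) μ := e1.add (h3.const_mul c2)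
  have e3 : Integrable (fun x => c1 * (f1 x - f2 x) + c2 * f3 x + c3 * f4 x) μ := e2.add (h4.const_mul c3)
  rw [integral_add e3 h5, integral_add e2 (h4.const_mul c3), integral_add e1 (h3.const_mul c2),
    integral_const_mul, integral_const_mul, integral_const_mul, integral_sub h1 h2]

theorem isLoop_ZZ (θ α : ℝ) (M N : ℕ) (hθ : 0 < θ) (hα : 0 < α) (hM : N ≤ M) :
    IsLoop θ (θ * α) (θ * ((M : ℝ) - N) + θ) N (ZZ θ α M N) := by
  have hp := ensemble_prob θ α M N hθ hα hM
  have hI := ensemble_integrable θ α M N hθ hα hM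
  have hF : ∀ L, Integrable (fun x => Fprod L x) (jacobiEnsemble θ α M N) := fun L => hI _ (Fprod_continuous L)
  constructor
  · simp [ZZ, Fprod_nil]
  · intro L
    simp [ZZ, Fprod_cons, integral_const_mul]
  · intro x L
    simp only [ZZ, Fprod_cons, pow_zero]
    rw [← integral_const_mul]
    congr 1
    funext y
    simp; ring
  · intro k L
    have h0 : ∫ x, (dF k L x + Fprod L x * dR θ α M N k x) ∂(jacobiEnsemble θ α M N) = 0 := by
      rw [ensemble_integral, loop_raw θ α M N k hθ hα hM L, mul_zero]
    have hpt : ∀ x : Fin N → ℝ, dF k L x + Fprod L x * dR θ α M N k x =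
        θ * (∑ l ∈ Finset.range (k + 1), Fprod (l :: (k - l) :: L) x -
          ∑ l ∈ Finset.range (k + 2), Fprod (l :: (k + 1 - l) :: L) x) +
        (-θ * (k + 1) + (θ * α - 1) + (k + 1)) * Fprod (k :: L) x +
        (θ * (k + 2) - (θ * α - 1) - ((θ * ((M : ℝ) - N) + θ) - 1) - (k + 2)) * Fprod ((k + 1) :: L) x +
        SS (fun (y : ℕ) (A : List ℕ) => (y : ℝ) * (Fprod ((k + y) :: A) x - Fprod ((k + 1 + y) :: A) x)) L := by
      intro x
      have h1 := dF_SS k x L 1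
      simp only [one_mul] at h1
      rw [← h1, dR_eq]
      simp only [Fprod_cons, ← mul_assoc]
      rw [← Finset.sum_mul, ← Finset.sum_mul]
      ring
    simp only [hpt] at h0
    have hc : ∀ (y : ℕ) (A : List ℕ), Continuous (fun x : Fin N → ℝ => (y : ℝ) * (Fprod ((k + y) :: A) x - Fprod ((k + 1 + y) :: A) x)) :=
      fun y A => continuous_const.mul ((Fprod_continuous _).sub (Fprod_continuous _))
    have hSS := SS_integral (jacobiEnsemble θ α M N) hI L _ hc
    have hSSi := hI _ (SS_continuous L _ hc)
    have hs1 : Integrable (fun x => ∑ l ∈ Finset.range (k + 1), Fprod (l :: (k - l) :: L) x) (jacobiEnsemble θ α M N) :=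
      integrable_finsetSum _ fun l _ => hF _
    have hs2 : Integrable (fun x => ∑ l ∈ Finset.range (k + 2), Fprod (l :: (k + 1 - l) :: L) x) (jacobiEnsemble θ α M N) :=
      integrable_finsetSum _ fun l _ => hF _
    rw [integral_comb _ _ _ _ hs1 hs2 (hF _) (hF _) hSSi, integral_finsetSum _ (fun l _ => hF _),
      integral_finsetSum _ (fun l _ => hF _), hSS] at h0
    have hfun : (fun (x : ℕ) (A : List ℕ) => (x : ℝ) * (ZZ θ α M N ((k + x) :: A) - ZZ θ α M N ((k + 1 + x) :: A))) =
      (fun (y : ℕ) (A : List ℕ) => ∫ x, (y : ℝ) * (Fprod ((k + y) :: A) x - Fprod ((k + 1 + y) :: A) x) ∂(jacobiEnsemble θ α M N)) := by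
      funext y A
      rw [integral_const_mul, integral_sub (hF _) (hF _)]
      rfl
    rw [hfun]
    exact h0

end JC

/-- **Vanishing of higher joint cumulants for a single β-Jacobi ensemble** (equal-times
case of the paper's Theorem 5.3): for `m ≥ 3`,
`κ(𝔓_{k₁}(y),…,𝔓_{k_m}(y)) → 0` as `N → ∞`. -/
theorem jacobi_higher_cumulants_vanish
    (θ : ℝ) (hθ : 0 < θ) (α : ℕ → ℝ) (M : ℕ → ℕ)
    (hα : ∀ N : ℕ, 1 ≤ N → 0 < α N) (hM : ∀ N : ℕ, 1 ≤ N → N ≤ M N)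
    (αhat Mhat : ℝ) (hαhat : 0 ≤ αhat)
    (hαlim : Filter.Tendsto (fun N : ℕ => α N / (N : ℝ)) Filter.atTop (nhds αhat))
    (hMlim : Filter.Tendsto (fun N : ℕ => (M N : ℝ) / (N : ℝ)) Filter.atTop (nhds Mhat))
    (m : ℕ) (hm : 3 ≤ m) (k : Fin m → ℕ) (hk : ∀ i, 0 < k i) :
    Filter.Tendsto
      (fun N : ℕ => jointCumulant (jacobiEnsemble θ (α N) (M N) N)
        (fun i y => ((∑ j : Fin N, (y j) ^ (k i) : ℝ) : ℂ)))
      Filter.atTop (nhds 0) := by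
  obtain ⟨x, L, hxL⟩ : ∃ x L, List.finRange m = x :: L := by
    rcases h : List.finRange m with _ | ⟨x, L⟩
    · have := congrArg List.length h
      simp at this; omega
    · exact ⟨x, L, rfl⟩
  have hlen : L.length = m - 1 := by
    have := congrArg List.length hxL
    simp at this; omega
  have hnd : (x :: L).Nodup := hxL ▸ List.nodup_finRange m
  have huniv : (x :: L).toFinset = Finset.univ := by
    rw [← hxL]; exact List.toFinset_finRange m
  have hac : ∀ᶠ N : ℕ in Filter.atTop, θ * α N ≤ (θ * (αhat + 1)) * N := by
    have h1 := hαlim.eventually (gt_mem_nhds (show αhat < αhat + 1 by linarith))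
    filter_upwards [h1, Filter.eventually_ge_atTop 1] with N h hN
    have hN' : (0 : ℝ) < N := by exact_mod_cast hN
    rw [div_lt_iff₀ hN'] at h
    rw [mul_assoc]
    exact mul_le_mul_of_nonneg_left h.le hθ.le
  obtain ⟨C, hC0, hC⟩ := JC.bound_all θ hθ (fun N => θ * α N) (fun N => θ * ((M N : ℝ) - N) + θ)
    (fun N => JC.ZZ θ (α N) (M N) N)
    (fun N hN => JC.isLoop_ZZ θ (α N) (M N) N hθ (hα N hN) (hM N hN))
    (fun N hN => mul_pos hθ (hα N hN))
    (fun N hN => by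
      have : (N : ℝ) ≤ M N := by exact_mod_cast hM N hN
      have : 0 ≤ θ * ((M N : ℝ) - N) := mul_nonneg hθ.le (by linarith)
      show 0 < θ * ((M N : ℝ) - N) + θ
      linarith)
    (θ * (αhat + 1)) (by positivity) hac (k x + (L.map k).sum + 1)
  have hlim : Filter.Tendsto (fun N : ℕ => C * (1 / (N : ℝ))) Filter.atTop (nhds 0) := by
    simpa using (tendsto_one_div_atTop_nhds_zero_nat (𝕜 := ℝ)).const_mul C
  refine squeeze_zero_norm' ?_ hlim
  filter_upwards [hC, Filter.eventually_ge_atTop 1] with N hN hN1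
  have hN' : (1 : ℝ) ≤ N := by exact_mod_cast hN1
  have h1 := hN (k x) (L.map k) (by
    intro y hy
    obtain ⟨i, _, rfl⟩ := List.mem_map.1 hy
    exact hk i) (Nat.lt_succ_self _)
  have := JC.ensemble_prob θ (α N) (M N) N hθ (hα N hN1) (hM N hN1)
  have h2 := JC.kap_eq_cum (JC.ZZ θ (α N) (M N) N)
    (fun S => ∫ y, ∏ i ∈ S, (∑ j : Fin N, (y j) ^ (k i)) ∂(jacobiEnsemble θ (α N) (M N) N)) k
    (JC.isLoop_ZZ θ (α N) (M N) N hθ (hα N hN1) (hM N hN1)).nil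
    (by
      intro A hA
      unfold JC.ZZ
      congr 1
      funext y
      rw [JC.Fprod, List.prod_toFinset _ hA, List.map_map]
      rfl) x L hnd
  rw [huniv] at h2
  rw [JC.jointCumulant_eq (jacobiEnsemble θ (α N) (M N) N) (fun i y => ∑ j : Fin N, (y j) ^ (k i)), ← h2,
    Complex.norm_real, Real.norm_eq_abs]
  refine h1.trans ?_
  rw [List.length_map, hlen]
  obtain ⟨r, rfl⟩ : ∃ r, m = r + 3 := ⟨m - 3, by omega⟩
  have h3 : (1 / (N : ℝ)) ^ (r + 3 - 1) ≤ (1 / (N : ℝ)) ^ 2 :=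
    pow_le_pow_of_le_one (by positivity) (by rw [div_le_one (by linarith)]; exact hN') (by omega)
  calc C * N * (1 / (N : ℝ)) ^ (r + 3 - 1) ≤ C * N * (1 / (N : ℝ)) ^ 2 :=
        mul_le_mul_of_nonneg_left h3 (by positivity)
    _ = C * (1 / (N : ℝ)) := by field_simp
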